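/- arXiv:1808.05381 — 9 statements merged into one kernel-verified Lean document; each statement's English description precedes it below -/
import Mathlib

section
/- Let K be a field that is an algebraic extension of its prime subfield (i.e. every element of K is algebraic over the prime subfield of K), let A be a unital associative K-algebra, and let d : A → A be a derivation of the ring A. Then d vanishes on the image of K in A (d(algebraMap K A (k)) = 0 for all k ∈ K) and d is a K-linear map (d(k • a) = k • d(a) for all k ∈ K, a ∈ A). -/
/-!
Restricting `d` along `K → A` gives a `ℤ`-derivation of the commutative ring `K` with values in the
`K`-module `A`, so it suffices that `Ω[K⁄ℤ] = 0`. The prime subfield is an epimorphic image of `ℤ`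
(a localization or a quotient) and is perfect, so `K` is separable over it; hence both steps of the
tower `ℤ → ⊥ → K` are formally unramified.
-/

section PrimeSubfield

variable (K : Type*) [Field K]

theorem perfectField_bot_subfield : PerfectField (⊥ : Subfield K) := by
  obtain _ | ⟨p, _, _⟩ := CharP.exists' K
  · infer_instance
  · have : Fintype (⊥ : Subfield K) := Subfield.fintypeBot K p
    infer_instance

theorem formallyUnramified_int_bot_subfield : Algebra.FormallyUnramified ℤ (⊥ : Subfield K) := by
  obtain _ | ⟨p, _, _⟩ := CharP.exists' K
  · have : Algebra.FormallyUnramified ℤ ℚ := .of_isLocalization (nonZeroDivisors ℤ)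
    rw [Subfield.bot_eq_of_charZero]
    exact .of_surjective (algebraMap ℚ K).rangeRestrictField.toIntAlgHom
      (algebraMap ℚ K).rangeRestrictField_bijective.surjective
  · refine .of_surjective (Algebra.ofId ℤ (⊥ : Subfield K)) fun x ↦ ?_
    obtain ⟨n, hn⟩ := (mem_bot_iff_intCast p K).1 x.2
    exact ⟨n, Subtype.ext <| by simpa using hn⟩

theorem formallyUnramified_int_of_isAlgebraic_bot_subfield
    [Algebra.IsAlgebraic (⊥ : Subfield K) K] : Algebra.FormallyUnramified ℤ K := by
  have := perfectField_bot_subfield K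
  have := formallyUnramified_int_bot_subfield K
  have : Algebra.FormallyUnramified (⊥ : Subfield K) K := .of_isSeparable _ _
  exact .comp ℤ (⊥ : Subfield K) K

end PrimeSubfield

theorem subsingleton_derivation_of_formallyUnramified (R S M : Type*) [CommRing R] [CommRing S]
    [Algebra R S] [Algebra.FormallyUnramified R S] [AddCommGroup M] [Module R M] [Module S M]
    [IsScalarTower R S M] : Subsingleton (Derivation R S M) :=
  (KaehlerDifferential.linearMapEquivDerivation R S).symm.injective.subsingleton

section Restriction

variable {R A : Type*} [CommRing R] [Ring A] [Algebra R A]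

variable (R) in
/-- The restriction to `R` of a derivation `d` of a noncommutative `R`-algebra `A`. Mathlib's
`Derivation` needs a commutative source, and `A` is its target as an `R`-module; the Leibniz rule
takes the required form because the image of `R` is central. -/
def restrictDerivation (d : A → A)
    (hadd : ∀ a b, d (a + b) = d a + d b) (hleib : ∀ a b, d (a * b) = d a * b + a * d b) :
    Derivation ℤ R A :=
  .mk' ((AddMonoidHom.mk' d hadd).comp (algebraMap R A : R →+ A)).toIntLinearMap fun x y ↦ by
    change d (algebraMap R A (x * y)) = x • d (algebraMap R A y) + y • d (algebraMap R A x)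
    rw [map_mul, hleib, ← Algebra.commutes, ← Algebra.smul_def, ← Algebra.smul_def, add_comm]

theorem derivation_eq_zero_on_field_and_linear_general [Algebra.FormallyUnramified ℤ R]
    (d : A → A) (hadd : ∀ a b, d (a + b) = d a + d b)
    (hleib : ∀ a b, d (a * b) = d a * b + a * d b) :
    (∀ r : R, d (algebraMap R A r) = 0) ∧ ∀ (r : R) (a : A), d (r • a) = r • d a := by
  have := subsingleton_derivation_of_formallyUnramified ℤ R A
  have hzero (r : R) : d (algebraMap R A r) = 0 :=
    DFunLike.congr_fun (Subsingleton.elim (restrictDerivation R d hadd hleib) 0) r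
  refine ⟨hzero, fun r a ↦ ?_⟩
  rw [Algebra.smul_def, hleib, hzero, zero_mul, zero_add, ← Algebra.smul_def]

end Restriction

/-- Let `K` be a field which is an algebraic extension of its prime subfield
(the prime subfield is `⊥ : Subfield K`), let `A` be a unital associative `K`-algebra and let
`d : A → A` be a derivation of the ring `A`. Then `d` vanishes on the image of `K` in `A`
and `d` is `K`-linear. -/
theorem derivation_eq_zero_on_field_and_linear {K : Type*} [Field K]
    (halg : ∀ x : K, IsAlgebraic (⊥ : Subfield K) x)
    {A : Type*} [Ring A] [Algebra K A]
    (d : A → A)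
    (hadd : ∀ a b : A, d (a + b) = d a + d b)
    (hleib : ∀ a b : A, d (a * b) = d a * b + a * d b) :
    (∀ k : K, d (algebraMap K A k) = 0) ∧ (∀ (k : K) (a : A), d (k • a) = k • d a) := by
  have : Algebra.IsAlgebraic (⊥ : Subfield K) K := ⟨halg⟩
  have := formallyUnramified_int_of_isAlgebraic_bot_subfield K
  exact derivation_eq_zero_on_field_and_linear_general d hadd hleib
end

section
/- Let G be a group generated by a subset S, let F_S be the free group on S, and let φ : F_S → G be the group homomorphism sending each free generator s ∈ S to the corresponding element s ∈ G. Let R be a commutative unital ring and let f : S → RG be any function into the group ring RG. Then there exists a unique function f* : F_S → RG such that f*(s) = f(s) for all s ∈ S and f*(uv) = f*(u)·φ(v) + φ(u)·f*(v) for all u, v ∈ F_S, where for g ∈ G the product with g denotes multiplication in RG by the basis element corresponding to g. -/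
/-!
A map `D` satisfies the Leibniz rule along a multiplicative map `ρ` exactly when `u ↦ (ρ u, D u)`
is multiplicative as a map into the square-zero extension `A ⊕ M`. An element of `A ⊕ M` is
invertible as soon as its first component is, so the pairs `(ρ (of a), f a)` determine a unique
homomorphism from the free group, whose second component is the required map.
-/

open scoped RightActions

section IsDerivationAlong

/-- Derivations along `ρ`: maps `D : H → M` obeying the Leibniz rule in which `H` acts on both sides
of the `A`-bimodule `M` through `ρ : H → A`. The right action of `A` is encoded, as usual, as an
action of `Aᵐᵒᵖ`. For `M = A = R[G]` this is the generalized Leibniz rule on a group ring. -/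
def IsDerivationAlong {H A M : Type*} [Mul H] [Add M] [SMul A M] [SMul Aᵐᵒᵖ M]
    (ρ : H → A) (D : H → M) : Prop :=
  ∀ u v, D (u * v) = D u <• ρ v + ρ u •> D v

variable {H A M : Type*} [Semiring A] [AddCommGroup M] [Module A M] [Module Aᵐᵒᵖ M]

theorem IsDerivationAlong.map_one [MulOneClass H] {ρ : H →* A} {D : H → M}
    (hD : IsDerivationAlong ρ D) : D 1 = 0 := by
  simpa using hD 1 1

/-- The graph `u ↦ (ρ u, D u)` of a derivation `D` along `ρ`, as a homomorphism into the
square-zero extension; it turns statements about derivations into statements about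
homomorphisms. -/
def IsDerivationAlong.graphHom [MulOneClass H] {ρ : H →* A} {D : H → M}
    (hD : IsDerivationAlong ρ D) : H →* TrivSqZeroExt A M where
  toFun u := .inl (ρ u) + .inr (D u)
  map_one' := by simp [hD.map_one]
  map_mul' u v := by ext <;> simp [hD u v, add_comm]

theorem IsDerivationAlong.snd_graphHom [MulOneClass H] {ρ : H →* A} {D : H → M}
    (hD : IsDerivationAlong ρ D) (u : H) : (hD.graphHom u).snd = D u := by
  simp [graphHom]

theorem isDerivationAlong_fst_snd [MulOneClass H] (F : H →* TrivSqZeroExt A M) :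
    IsDerivationAlong (fun u => (F u).fst) (fun u => (F u).snd) := fun u v => by
  simp [add_comm]

variable [SMulCommClass A Aᵐᵒᵖ M]

theorem IsDerivationAlong.eq_of_eqOn_dense [Group H] {ρ : H →* A} {D₁ D₂ : H → M}
    (h₁ : IsDerivationAlong ρ D₁) (h₂ : IsDerivationAlong ρ D₂) {s : Set H}
    (hs : Subgroup.closure s = ⊤) (h : s.EqOn D₁ D₂) : D₁ = D₂ := by
  have graph_eq : h₁.graphHom = h₂.graphHom :=
    MonoidHom.eq_of_eqOn_dense hs fun u hu => by simp [graphHom, h hu]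
  funext u
  rw [← h₁.snd_graphHom, graph_eq, h₂.snd_graphHom]

end IsDerivationAlong

section FreeGroup

variable {α : Type*}

theorem exists_freeGroup_hom_of_isUnit {N : Type*} [Monoid N] {x : α → N}
    (hx : ∀ a, IsUnit (x a)) : ∃ F : FreeGroup α →* N, ∀ a, F (FreeGroup.of a) = x a :=
  ⟨(Units.coeHom N).comp (FreeGroup.lift fun a => (hx a).unit), by simp⟩

variable {A M : Type*} [Semiring A] [AddCommGroup M] [Module A M] [Module Aᵐᵒᵖ M]
  [SMulCommClass A Aᵐᵒᵖ M]

theorem exists_isDerivationAlong_freeGroup (ρ : FreeGroup α →* A) (f : α → M) :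
    ∃ D : FreeGroup α → M, (∀ a, D (FreeGroup.of a) = f a) ∧ IsDerivationAlong ρ D := by
  let x (a : α) : TrivSqZeroExt A M := .inl (ρ (FreeGroup.of a)) + .inr (f a)
  have isUnit_x (a : α) : IsUnit (x a) := by
    simpa [x, TrivSqZeroExt.isUnit_iff_isUnit_fst] using (Group.isUnit (FreeGroup.of a)).map ρ
  obtain ⟨F, F_of⟩ := exists_freeGroup_hom_of_isUnit isUnit_x
  have fst_F : (TrivSqZeroExt.fstHom ℕ A M : TrivSqZeroExt A M →* A).comp F = ρ :=
    FreeGroup.ext_hom _ _ fun a => by simp [F_of, x]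
  refine ⟨fun u => (F u).snd, fun a => by simp [F_of, x], ?_⟩
  rw [← fst_F]
  exact isDerivationAlong_fst_snd F

theorem exists_unique_extension_generalized_leibniz_general (ρ : FreeGroup α →* A) (f : α → M) :
    ∃! D : FreeGroup α → M, (∀ a, D (FreeGroup.of a) = f a) ∧ IsDerivationAlong ρ D := by
  obtain ⟨D, D_of, hD⟩ := exists_isDerivationAlong_freeGroup ρ f
  refine ⟨D, ⟨D_of, hD⟩, fun D' ⟨D'_of, hD'⟩ => ?_⟩
  refine hD'.eq_of_eqOn_dense hD (FreeGroup.closure_range_of α) ?_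
  rintro _ ⟨a, rfl⟩
  rw [D'_of, D_of]

end FreeGroup

/-- Let `G` be a group generated by a subset `S`, let `F_S` be the free group
on `S` and `φ : F_S → G` the homomorphism sending each free generator to the corresponding
element of `G`. Let `R` be a commutative unital ring and `f : S → R G` any function into the
group ring. Then there is a unique function `f* : F_S → R G` extending `f` and satisfying
`f* (u * v) = f* u * φ v + φ u * f* v` for all `u v : F_S`. -/
theorem exists_unique_extension_generalized_leibniz {G : Type*} [Group G]
    (S : Set G) (hS : Subgroup.closure S = ⊤)
    {R : Type*} [CommRing R] (f : S → MonoidAlgebra R G) :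
    ∃! fstar : FreeGroup S → MonoidAlgebra R G,
      (∀ s : S, fstar (FreeGroup.of s) = f s) ∧
      (∀ u v : FreeGroup S,
        fstar (u * v) =
          fstar u * MonoidAlgebra.of R G (FreeGroup.lift (fun s : S => (s : G)) v) +
          MonoidAlgebra.of R G (FreeGroup.lift (fun s : S => (s : G)) u) * fstar v) :=
  exists_unique_extension_generalized_leibniz_general
    ((MonoidAlgebra.of R G).comp (FreeGroup.lift fun s : S => (s : G))) f
end

section
/- Let G = ⟨S ∣ T⟩ be a presented group, where S is a generating set, T ⊆ F_S is a set of relators in the free group F_S on S, and φ : F_S → G is the canonical surjection. Let R be a commutative unital ring, let f : S → RG be a function, and let f* : F_S → RG be the unique extension of f satisfying f*(uv) = f*(u)·φ(v) + φ(u)·f*(v) for all u, v ∈ F_S. Then: (1) there exists an R-derivation d of the group ring RG with d(φ(s)) = f(s) for all s ∈ S if and only if f*(t) = 0 for all t ∈ T; and (2) when such an R-derivation exists, it is unique. -/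
/-- A map `d` on the group ring `R⟨S∣T⟩` is an `R`-derivation extending `f : S → R⟨S∣T⟩`
(along the canonical surjection) if it is additive, satisfies the Leibniz rule, vanishes on
the image of `R`, and sends (the image in the group ring of) each generator `s` to `f s`. -/
def IsRDerivationExtending {S : Type*} (T : Set (FreeGroup S)) {R : Type*} [CommRing R]
    (f : S → MonoidAlgebra R (PresentedGroup T))
    (d : MonoidAlgebra R (PresentedGroup T) → MonoidAlgebra R (PresentedGroup T)) : Prop :=
  (∀ a b, d (a + b) = d a + d b) ∧
  (∀ a b, d (a * b) = d a * b + a * d b) ∧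
  (∀ r : R, d (algebraMap R (MonoidAlgebra R (PresentedGroup T)) r) = 0) ∧
  (∀ s : S, d (MonoidAlgebra.of R (PresentedGroup T) (PresentedGroup.of s)) = f s)

/-!
A map `δ` from a monoid to a bimodule `M` over `A` satisfies the Leibniz rule along `φ` exactly when
`u ↦ φ u + ε δ u` is a monoid homomorphism to the trivial square-zero extension `A ⊕ ε M`.
Under this dictionary every statement about derivations becomes one about homomorphisms: maps that
agree on generators are equal; a homomorphism descends along a quotient of groups iff it kills the
relators, i.e. (as `φ` already kills them) iff `δ` vanishes on them; and a homomorphism from a group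
to an algebra extends to the group ring.
-/

section LeibnizRule

open scoped RightActions

variable {N H G A M : Type*} [Monoid N] [Group H] [Group G] [Semiring A]
  [AddCancelCommMonoid M] [Module A M] [Module Aᵐᵒᵖ M]

/-- The generalized Leibniz rule along a homomorphism `φ` from a monoid to the multiplicative monoid
of `A`, for maps with values in an `A`-bimodule. The right action of `A` is encoded as an action of
`Aᵐᵒᵖ`. -/
def LeibnizAlong (φ : N →* A) (δ : N → M) : Prop :=
  ∀ u v, δ (u * v) = δ u <• φ v + φ u •> δ v

namespace LeibnizAlong

variable {φ : N →* A} {δ : N → M}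

protected theorem map_one (hδ : LeibnizAlong φ δ) : δ 1 = 0 := by
  have h := hδ 1 1
  rw [mul_one, map_one, MulOpposite.op_one, one_smul, one_smul] at h
  exact left_eq_add.mp h

/-- The homomorphism `u ↦ φ u + ε δ u` to the trivial square-zero extension of `A` by `M` attached
to a map `δ` satisfying the Leibniz rule along `φ`. -/
def toTrivSqZeroExt (hδ : LeibnizAlong φ δ) : N →* TrivSqZeroExt A M where
  toFun u := (φ u, δ u)
  map_one' := TrivSqZeroExt.ext (map_one φ) hδ.map_one
  map_mul' u v := TrivSqZeroExt.ext (map_mul φ u v) ((hδ u v).trans (add_comm _ _))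

theorem fst_toTrivSqZeroExt (hδ : LeibnizAlong φ δ) (u : N) : (hδ.toTrivSqZeroExt u).fst = φ u :=
  rfl

theorem of_trivSqZeroExt (Φ : N →* TrivSqZeroExt A M) (hΦ : ∀ u, (Φ u).fst = φ u) :
    LeibnizAlong φ (fun u => (Φ u).snd) := fun u v => by
  simp only [map_mul, TrivSqZeroExt.snd_mul, hΦ, add_comm]

variable [SMulCommClass A Aᵐᵒᵖ M]

theorem eq_of_eqOn_dense {φ : H →* A} {δ₁ δ₂ : H → M} (h₁ : LeibnizAlong φ δ₁)
    (h₂ : LeibnizAlong φ δ₂) {s : Set H} (hs : Subgroup.closure s = ⊤) (h : s.EqOn δ₁ δ₂) :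
    δ₁ = δ₂ := by
  have hom_eq : h₁.toTrivSqZeroExt = h₂.toTrivSqZeroExt :=
    MonoidHom.eq_of_eqOn_dense hs fun u hu => TrivSqZeroExt.ext rfl (h hu)
  exact funext fun u => congrArg TrivSqZeroExt.snd (DFunLike.congr_fun hom_eq u)

theorem exists_descent_of_eq_zero_on_relators {π : H →* G} (hπ : Function.Surjective π) {T : Set H}
    (hker : π.ker = Subgroup.normalClosure T) {φ : G →* A} {δ : H → M}
    (hδ : LeibnizAlong (φ.comp π) δ) (hT : ∀ t ∈ T, δ t = 0) :
    ∃ δ' : G → M, LeibnizAlong φ δ' ∧ ∀ u, δ' (π u) = δ u := by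
  have ker_le : π.ker ≤ hδ.toTrivSqZeroExt.ker := by
    rw [hker]
    refine Subgroup.normalClosure_le_normal fun t ht => ?_
    have hπt : π t = 1 := π.mem_ker.mp (hker ▸ Subgroup.subset_normalClosure ht)
    exact TrivSqZeroExt.ext ((congrArg φ hπt).trans (map_one φ)) (hT t ht)
  let e := QuotientGroup.quotientKerEquivOfSurjective π hπ
  let Φ : G →* TrivSqZeroExt A M :=
    (QuotientGroup.lift π.ker hδ.toTrivSqZeroExt ker_le).comp e.symm.toMonoidHom
  have Φ_apply (u : H) : Φ (π u) = hδ.toTrivSqZeroExt u :=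
    congrArg (QuotientGroup.lift π.ker _ ker_le) (e.symm_apply_apply (u : H ⧸ π.ker))
  refine ⟨fun g => (Φ g).snd, of_trivSqZeroExt Φ fun g => ?_, fun u => ?_⟩
  · obtain ⟨u, rfl⟩ := hπ g
    rw [Φ_apply, fst_toTrivSqZeroExt, MonoidHom.comp_apply]
  · exact congrArg TrivSqZeroExt.snd (Φ_apply u)

end LeibnizAlong

end LeibnizRule

section BimoduleDerivation

variable {N B M : Type*} (R : Type*) [Monoid N] [CommSemiring R] [Semiring B] [Algebra R B]
  [AddCancelCommMonoid M] [Module B M] [Module Bᵐᵒᵖ M]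

/-- `D` is an `R`-derivation of the `R`-algebra `B` with values in a `B`-bimodule. Unlike for
`Derivation`, the algebra need not be commutative; `R`-linearity is expressed as the vanishing of
`D` on the image of `R`. -/
structure IsBimoduleDerivation (D : B → M) : Prop where
  map_add : ∀ a b, D (a + b) = D a + D b
  leibniz : LeibnizAlong (MonoidHom.id B) D
  map_algebraMap : ∀ r : R, D (algebraMap R B r) = 0

namespace IsBimoduleDerivation

variable {R}

theorem leibnizAlong_comp {D : B → M} (hD : IsBimoduleDerivation R D) (φ : N →* B) :
    LeibnizAlong φ (D ∘ φ) := fun u v => by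
  simpa only [Function.comp_apply, map_mul, MonoidHom.id_apply] using hD.leibniz (φ u) (φ v)

protected theorem map_smul [Module R M] [IsScalarTower R B M] {D : B → M}
    (hD : IsBimoduleDerivation R D) (r : R) (b : B) : D (r • b) = r • D b := by
  rw [Algebra.smul_def, hD.leibniz, hD.map_algebraMap, smul_zero, zero_add, MonoidHom.id_apply,
    algebraMap_smul]

end IsBimoduleDerivation

end BimoduleDerivation

section MonoidAlgebra

open MonoidAlgebra

variable {R N M : Type*} [CommSemiring R] [Monoid N] [AddCancelCommMonoid M] [Module R M]
  [Module (MonoidAlgebra R N) M] [Module (MonoidAlgebra R N)ᵐᵒᵖ M]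
  [IsScalarTower R (MonoidAlgebra R N) M]

theorem IsBimoduleDerivation.eq_of_comp_of {D₁ D₂ : MonoidAlgebra R N → M}
    (h₁ : IsBimoduleDerivation R D₁) (h₂ : IsBimoduleDerivation R D₂)
    (h : D₁ ∘ of R N = D₂ ∘ of R N) : D₁ = D₂ := by
  funext a
  induction a using MonoidAlgebra.induction_on with
  | of g => exact congrFun h g
  | add a b ha hb => rw [h₁.map_add, h₂.map_add, ha, hb]
  | smul r a ha => rw [h₁.map_smul, h₂.map_smul, ha]

theorem LeibnizAlong.exists_isBimoduleDerivation
    [SMulCommClass (MonoidAlgebra R N) (MonoidAlgebra R N)ᵐᵒᵖ M]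
    [IsScalarTower R (MonoidAlgebra R N)ᵐᵒᵖ M] {δ : N → M} (hδ : LeibnizAlong (of R N) δ) :
    ∃ D : MonoidAlgebra R N → M, IsBimoduleDerivation R D ∧ ∀ g, D (of R N g) = δ g := by
  let Φ : MonoidAlgebra R N →ₐ[R] TrivSqZeroExt (MonoidAlgebra R N) M :=
    lift R _ N hδ.toTrivSqZeroExt
  have Φ_of (g : N) : Φ (of R N g) = hδ.toTrivSqZeroExt g := lift_of _ g
  have fst_comp_Φ : (TrivSqZeroExt.fstHom R (MonoidAlgebra R N) M).comp Φ = AlgHom.id R _ :=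
    algHom_ext (fun g => congrArg TrivSqZeroExt.fst (Φ_of g)) (Subsingleton.elim _ _)
  refine ⟨fun a => (Φ a).snd, ⟨fun a b => ?_, ?_, fun r => ?_⟩, fun g => ?_⟩
  · rw [map_add, TrivSqZeroExt.snd_add]
  · exact .of_trivSqZeroExt (Φ : MonoidAlgebra R N →* TrivSqZeroExt (MonoidAlgebra R N) M)
      (DFunLike.congr_fun fst_comp_Φ)
  · exact congrArg TrivSqZeroExt.snd (Φ.commutes r)
  · exact congrArg TrivSqZeroExt.snd (Φ_of g)

end MonoidAlgebra

open MonoidAlgebra in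
theorem extends_to_RDerivation_iff_and_unique_general {ι H G R M : Type*} [Group H] [Group G]
    [CommSemiring R] [AddCancelCommMonoid M] [Module R M] [Module (MonoidAlgebra R G) M]
    [Module (MonoidAlgebra R G)ᵐᵒᵖ M] [SMulCommClass (MonoidAlgebra R G) (MonoidAlgebra R G)ᵐᵒᵖ M]
    [IsScalarTower R (MonoidAlgebra R G) M] [IsScalarTower R (MonoidAlgebra R G)ᵐᵒᵖ M]
    {π : H →* G} (hπ : Function.Surjective π) {T : Set H}
    (hker : π.ker = Subgroup.normalClosure T) {x : ι → H}
    (hx : Subgroup.closure (Set.range x) = ⊤) {δ : H → M}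
    (hδ : LeibnizAlong ((of R G).comp π) δ) :
    ((∃ D : MonoidAlgebra R G → M, IsBimoduleDerivation R D ∧
        ∀ i, D (of R G (π (x i))) = δ (x i)) ↔ ∀ t ∈ T, δ t = 0) ∧
      ∀ D₁ D₂ : MonoidAlgebra R G → M,
        (IsBimoduleDerivation R D₁ ∧ ∀ i, D₁ (of R G (π (x i))) = δ (x i)) →
        (IsBimoduleDerivation R D₂ ∧ ∀ i, D₂ (of R G (π (x i))) = δ (x i)) → D₁ = D₂ := by
  have apply_eq {D : MonoidAlgebra R G → M} (hD : IsBimoduleDerivation R D)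
      (hDx : ∀ i, D (of R G (π (x i))) = δ (x i)) (u : H) : D (of R G (π u)) = δ u :=
    congrFun ((hD.leibnizAlong_comp _).eq_of_eqOn_dense hδ hx (Set.forall_mem_range.mpr hDx)) u
  refine ⟨⟨?_, fun hT => ?_⟩, ?_⟩
  · rintro ⟨D, hD, hDx⟩ t ht
    have hπt : π t = 1 := π.mem_ker.mp (hker ▸ Subgroup.subset_normalClosure ht)
    rw [← apply_eq hD hDx, hπt, map_one, hD.leibniz.map_one]
  · obtain ⟨δ', hδ', hδ'π⟩ := hδ.exists_descent_of_eq_zero_on_relators hπ hker hT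
    obtain ⟨D, hD, hDδ'⟩ := hδ'.exists_isBimoduleDerivation
    exact ⟨D, hD, fun i => (hDδ' _).trans (hδ'π _)⟩
  · rintro D₁ D₂ ⟨h₁, h₁x⟩ ⟨h₂, h₂x⟩
    refine h₁.eq_of_comp_of h₂ (funext (hπ.forall.mpr fun u => ?_))
    exact (apply_eq h₁ h₁x u).trans (apply_eq h₂ h₂x u).symm

theorem isRDerivationExtending_iff {S : Type*} {T : Set (FreeGroup S)} {R : Type*} [CommRing R]
    {f : S → MonoidAlgebra R (PresentedGroup T)}
    {d : MonoidAlgebra R (PresentedGroup T) → MonoidAlgebra R (PresentedGroup T)} :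
    IsRDerivationExtending T f d ↔ IsBimoduleDerivation R d ∧
      ∀ s, d (MonoidAlgebra.of R _ (PresentedGroup.mk T (FreeGroup.of s))) = f s :=
  ⟨fun ⟨h_add, h_mul, h_alg, h_gen⟩ => ⟨⟨h_add, h_mul, h_alg⟩, h_gen⟩,
    fun ⟨⟨h_add, h_mul, h_alg⟩, h_gen⟩ => ⟨h_add, h_mul, h_alg, h_gen⟩⟩

/-- Let `G = ⟨S ∣ T⟩` be a presented group with canonical surjection
`φ = PresentedGroup.mk T : F_S → G`, let `R` be a commutative unital ring, `f : S → R G` a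
function, and `f* : F_S → R G` the (unique) extension of `f` satisfying the generalized
Leibniz rule `f* (u v) = f* u · φ v + φ u · f* v`. Then (1) `f` extends to an `R`-derivation
of `R G` if and only if `f*` vanishes on every relator `t ∈ T`, and (2) such an extension,
when it exists, is unique. -/
theorem extends_to_RDerivation_iff_and_unique {S : Type*} (T : Set (FreeGroup S))
    {R : Type*} [CommRing R]
    (f : S → MonoidAlgebra R (PresentedGroup T))
    (fstar : FreeGroup S → MonoidAlgebra R (PresentedGroup T))
    (hext : ∀ s : S, fstar (FreeGroup.of s) = f s)
    (hleib : ∀ u v : FreeGroup S,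
      fstar (u * v) =
        fstar u * MonoidAlgebra.of R (PresentedGroup T) (PresentedGroup.mk T v) +
        MonoidAlgebra.of R (PresentedGroup T) (PresentedGroup.mk T u) * fstar v) :
    ((∃ d, IsRDerivationExtending T f d) ↔ ∀ t ∈ T, fstar t = 0) ∧
    (∀ d₁ d₂, IsRDerivationExtending T f d₁ → IsRDerivationExtending T f d₂ → d₁ = d₂) := by
  have hδ : LeibnizAlong ((MonoidAlgebra.of R _).comp (PresentedGroup.mk T)) fstar := hleib
  have hker : (PresentedGroup.mk T).ker = Subgroup.normalClosure T := QuotientGroup.ker_mk' _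
  simpa only [isRDerivationExtending_iff, hext] using
    extends_to_RDerivation_iff_and_unique_general (PresentedGroup.mk_surjective T)
      hker (FreeGroup.closure_range_of S) hδ
end

section
/- Let F be a field of characteristic zero such that every element of F is algebraic over ℚ (e.g. F = ℚ or any algebraic extension of ℚ), and let G be a finite abelian group. Then the group algebra FG has no nonzero derivations: every derivation d : FG → FG is identically zero. -/
/-!
If `x ^ n = 1` and `n` is a unit, then `0 = D (x ^ n) = n • x ^ (n - 1) • D x` forces `D x = 0` for
every derivation `D`. Hence a group algebra `A[G]` is formally unramified over `A` as soon as the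
orders of the elements of `G` are units of `A`. An algebraic extension `F` of `ℚ` is formally
unramified over `ℚ` because it is separable, and `ℚ` is so over `ℤ` because it is a localization,
so `F[G]` is formally unramified over `ℤ`. Additive maps are `ℤ`-linear, so this covers every
additive derivation.
-/

theorem derivation_apply_eq_zero_of_pow_eq_one {R A M : Type*} [CommSemiring R]
    [CommSemiring A] [Algebra R A] [AddCommMonoid M] [Module R M] [Module A M]
    (D : Derivation R A M) {x : A} {n : ℕ} (hn : IsUnit (n : A)) (hx : x ^ n = 1) : D x = 0 := by
  have hpow : IsUnit (x ^ (n - 1)) := isUnit_of_dvd_one (hx ▸ pow_dvd_pow x (n.sub_le 1))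
  have hD : (n : A) • x ^ (n - 1) • D x = 0 := by
    rw [Nat.cast_smul_eq_nsmul, ← D.leibniz_pow, hx, D.map_one_eq_zero]
  rwa [hn.smul_eq_zero, hpow.smul_eq_zero] at hD

theorem derivation_eq_zero_of_formallyUnramified {R A M : Type*} [CommRing R] [CommRing A]
    [Algebra R A] [Algebra.FormallyUnramified R A] [AddCommGroup M] [Module R M] [Module A M]
    [IsScalarTower R A M] (D : Derivation R A M) : D = 0 :=
  (KaehlerDifferential.linearMapEquivDerivation R A).symm.injective (Subsingleton.elim _ _)

theorem formallyUnramified_of_adjoin_eq_top {R A : Type*} [CommRing R] [CommRing A] [Algebra R A]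
    {s : Set A} (hs : Algebra.adjoin R s = ⊤) (hD : s.EqOn (KaehlerDifferential.D R A) 0) :
    Algebra.FormallyUnramified R A := by
  have hD0 : KaehlerDifferential.D R A = 0 := Derivation.ext_of_adjoin_eq_top s hs hD
  refine ⟨Submodule.subsingleton_iff A |>.mp <| subsingleton_of_bot_eq_top ?_⟩
  rw [← KaehlerDifferential.span_range_derivation, eq_comm, Submodule.span_eq_bot]
  rintro _ ⟨x, rfl⟩
  rw [hD0, Derivation.zero_apply]

theorem adjoin_range_monoidAlgebra_of (R G : Type*) [CommSemiring R] [Monoid G] :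
    Algebra.adjoin R (Set.range (MonoidAlgebra.of R G)) = ⊤ :=
  eq_top_iff.mpr fun f _ ↦
    Algebra.adjoin_mono (Set.image_subset_range _ _) (MonoidAlgebra.mem_adjoin_support f)

theorem formallyUnramified_monoidAlgebra_of_isUnit_orderOf {A G : Type*} [CommRing A]
    [CommMonoid G] (hG : ∀ g : G, IsUnit (orderOf g : A)) :
    Algebra.FormallyUnramified A (MonoidAlgebra A G) := by
  refine formallyUnramified_of_adjoin_eq_top (adjoin_range_monoidAlgebra_of A G) ?_
  rintro _ ⟨g, rfl⟩
  have horder : IsUnit (orderOf g : MonoidAlgebra A G) := by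
    simpa using (hG g).map (algebraMap A (MonoidAlgebra A G))
  refine derivation_apply_eq_zero_of_pow_eq_one _ horder ?_
  rw [← map_pow, pow_orderOf_eq_one, map_one]

theorem formallyUnramified_int_of_isAlgebraic_rat (F : Type*) [Field F] [CharZero F]
    [Algebra.IsAlgebraic ℚ F] : Algebra.FormallyUnramified ℤ F :=
  have : Algebra.FormallyUnramified ℤ ℚ := .of_isLocalization (nonZeroDivisors ℤ)
  have : Algebra.FormallyUnramified ℚ F := .of_isSeparable ℚ F
  .comp ℤ ℚ F

theorem derivation_groupAlgebra_rat_algebraic_eq_zero_general {A G : Type*} [CommRing A]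
    [Algebra.FormallyUnramified ℤ A] [CommGroup G] (hG : ∀ g : G, IsUnit (orderOf g : A))
    (d : MonoidAlgebra A G → MonoidAlgebra A G)
    (hadd : ∀ a b, d (a + b) = d a + d b)
    (hleib : ∀ a b, d (a * b) = d a * b + a * d b) :
    ∀ a : MonoidAlgebra A G, d a = 0 := by
  have : Algebra.FormallyUnramified A (MonoidAlgebra A G) :=
    formallyUnramified_monoidAlgebra_of_isUnit_orderOf hG
  have : Algebra.FormallyUnramified ℤ (MonoidAlgebra A G) := .comp ℤ A _
  let D : Derivation ℤ (MonoidAlgebra A G) (MonoidAlgebra A G) :=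
    .mk' (AddMonoidHom.mk' d hadd).toIntLinearMap fun a b ↦ by
      simp [hleib, mul_comm, add_comm]
  exact DFunLike.congr_fun (derivation_eq_zero_of_formallyUnramified D)

/-- Let `F` be a field of characteristic zero every element of which is
algebraic over `ℚ`, and let `G` be a finite abelian group. Then the group algebra `F G` has
no nonzero derivations. -/
theorem derivation_groupAlgebra_rat_algebraic_eq_zero {F : Type*} [Field F] [CharZero F]
    (halg : ∀ x : F, IsAlgebraic ℚ x)
    {G : Type*} [CommGroup G] [Finite G]
    (d : MonoidAlgebra F G → MonoidAlgebra F G)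
    (hadd : ∀ a b, d (a + b) = d a + d b)
    (hleib : ∀ a b, d (a * b) = d a * b + a * d b) :
    ∀ a : MonoidAlgebra F G, d a = 0 :=
  have : Algebra.IsAlgebraic ℚ F := ⟨halg⟩
  have := formallyUnramified_int_of_isAlgebraic_rat F
  derivation_groupAlgebra_rat_algebraic_eq_zero_general
    (fun g ↦ .mk0 _ (mod_cast (orderOf_pos g).ne')) d hadd hleib
end

section
/- Let p be a prime, let K be a finite field of characteristic p, let H be a finite abelian group with p not dividing |H|, let n ≥ 1, let m_1, …, m_n ≥ 1 be natural numbers, and let G = H × C_{p^{m_1}} × ⋯ × C_{p^{m_n}}, where C_{p^{m_i}} is the cyclic group of order p^{m_i}. For i = 1, …, n, let x_i ∈ G be the element which is the identity in H and in every cyclic factor except the i-th, where it equals a fixed generator of C_{p^{m_i}}. Then for any elements c_1, …, c_n of the group algebra KG, there exists a unique derivation d of KG with d(x_i) = c_i for all i = 1, …, n. -/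
/-!
On group elements a derivation `D` is the same thing as its logarithmic derivative `g ↦ g⁻¹ • D g`,
which is a homomorphism from `G` to an additive group killed by `p`. Since `p`-th powers are killed
by any derivation in characteristic `p`, the coefficients of a perfect ring and the `p`-divisible
part of `G` contribute nothing, and `D` amounts to a homomorphism out of `G / Gᵖ`. The
generators `xᵢ` are a basis of this quotient, so such a homomorphism may be prescribed
freely on them, here as `xᵢ ↦ xᵢ⁻¹ cᵢ`.
-/

open MonoidAlgebra

theorem derivation_pow_eq_zero_of_natCast_eq_zero {S A M : Type*} [CommSemiring S] [CommSemiring A]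
    [AddCommMonoid M] [Algebra S A] [Module S M] [Module A M] (D : Derivation S A M) {q : ℕ}
    (hq : (q : A) = 0) (a : A) : D (a ^ q) = 0 := by
  rw [D.leibniz_pow, ← Nat.cast_smul_eq_nsmul A, hq, zero_smul]

theorem existsUnique_fun_of_existsUnique_derivation {A ι : Type*} [CommRing A] {x c : ι → A}
    (h : ∃! D : Derivation ℤ A A, ∀ i, D (x i) = c i) :
    ∃! d : A → A, (∀ a b, d (a + b) = d a + d b) ∧ (∀ a b, d (a * b) = d a * b + a * d b) ∧
      ∀ i, d (x i) = c i := by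
  obtain ⟨D, hD, D_unique⟩ := h
  refine ⟨D, ⟨map_add D, fun a b ↦ ?_, hD⟩, ?_⟩
  · rw [D.leibniz, smul_eq_mul, smul_eq_mul, add_comm, mul_comm b]
  · rintro d ⟨d_add, d_mul, d_x⟩
    let E : Derivation ℤ A A :=
      Derivation.mk' (AddMonoidHom.mk' d d_add).toIntLinearMap fun a b ↦
        (d_mul a b).trans <| by rw [add_comm, mul_comm (d a)]; rfl
    exact congrArg DFunLike.coe (D_unique E d_x)

section LogarithmicDerivative

variable {S R G M : Type*} [CommSemiring S] [CommRing R] [CommGroup G] [AddCommGroup M]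
  [Algebra S R[G]] [Module S M] [Module R[G] M]

/-- The logarithmic derivative `g ↦ g⁻¹ • D g` of a derivation of a group algebra, as a
homomorphism on the group. -/
noncomputable def groupLogDeriv (D : Derivation S R[G] M) : Additive G →+ M :=
  AddMonoidHom.mk' (fun g ↦ of R G g.toMul⁻¹ • D (of R G g.toMul)) fun g h ↦ by
    rw [toMul_add, map_mul (of R G) g.toMul, D.leibniz, smul_add, smul_smul, smul_smul,
      ← map_mul (of R G), ← map_mul (of R G), add_comm, mul_inv, inv_mul_cancel_comm,
      inv_mul_cancel_right]

theorem groupLogDeriv_apply (D : Derivation S R[G] M) (g : G) :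
    groupLogDeriv D (.ofMul g) = of R G g⁻¹ • D (of R G g) :=
  rfl

theorem groupLogDeriv_eq_zero_iff (D : Derivation S R[G] M) (g : G) :
    groupLogDeriv D (.ofMul g) = 0 ↔ D (of R G g) = 0 := by
  rw [groupLogDeriv_apply, ((Group.isUnit g⁻¹).map (of R G)).smul_eq_zero]

theorem derivation_eq_zero_of_closure_sup_powers_eq_top {p : ℕ} (hp : (p : R) = 0)
    (hR : Function.Surjective fun a : R ↦ a ^ p) {X : Set G}
    (hX : Subgroup.closure X ⊔ (powMonoidHom p).range = ⊤) {D : Derivation S R[G] M}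
    (hD : ∀ x ∈ X, D (of R G x) = 0) : D = 0 := by
  have D_pow : ∀ a, D (a ^ p) = 0 := derivation_pow_eq_zero_of_natCast_eq_zero D <| by
    rw [← map_natCast (algebraMap R R[G]), hp, map_zero]
  have D_scalar : ∀ r, D (algebraMap R R[G] r) = 0 := hR.forall.2 fun r ↦ by
    rw [map_pow, D_pow]
  have le_ker : Subgroup.closure X ⊔ (powMonoidHom p).range ≤
      (groupLogDeriv D).toMultiplicativeRight.ker := by
    refine sup_le ((Subgroup.closure_le _).2 fun x hx ↦ ?_) ?_
    · exact (groupLogDeriv_eq_zero_iff D x).2 (hD x hx)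
    · rintro _ ⟨g, rfl⟩
      refine (groupLogDeriv_eq_zero_iff D _).2 ?_
      rw [powMonoidHom_apply, map_pow, D_pow]
  have D_of (g : G) : D (of R G g) = 0 :=
    (groupLogDeriv_eq_zero_iff D g).1 <| le_ker <| hX ▸ Subgroup.mem_top g
  ext a
  rw [Derivation.zero_apply]
  induction a using MonoidAlgebra.induction_on with
  | of g => exact D_of g
  | add a b ha hb => rw [map_add, ha, hb, add_zero]
  | smul r a ha => rw [Algebra.smul_def, D.leibniz, D_scalar, ha, smul_zero, smul_zero, add_zero]

end LogarithmicDerivative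

section OfLogarithmicDerivative

variable {R G M : Type*} [CommRing R] [CommMonoid G] [AddCommGroup M] [Module R M] [Module R[G] M]
  [IsScalarTower R R[G] M]

theorem leibniz_of_leibniz_on_group (D : R[G] →ₗ[R] M)
    (hD : ∀ g h, D (of R G g * of R G h) = of R G g • D (of R G h) + of R G h • D (of R G g))
    (a b : R[G]) : D (a * b) = a • D b + b • D a := by
  induction a using MonoidAlgebra.induction_on with
  | of g =>
    induction b using MonoidAlgebra.induction_on with
    | of h => exact hD g h
    | add b b' hb hb' => rw [mul_add, map_add, hb, hb', map_add]; module
    | smul r b hb =>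
      rw [mul_smul_comm, map_smul, hb, map_smul, smul_add, smul_comm r, smul_assoc]
  | add a a' ha ha' => rw [add_mul, map_add, ha, ha', map_add]; module
  | smul r a ha => rw [smul_mul_assoc, map_smul, ha, map_smul, smul_add, smul_assoc, smul_comm b r]

/-- The derivation of a group algebra with prescribed logarithmic derivative `L`. The condition
`D g = g • L g` avoids inverses, so that `G` may be any commutative monoid. -/
noncomputable def derivationOfGroupLogDeriv (L : Additive G →+ M) : Derivation R R[G] M :=
  let D : R[G] →ₗ[R] M :=
    Finsupp.linearCombination R (fun g ↦ of R G g • L (.ofMul g)) ∘ₗ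
      (coeffLinearEquiv R).toLinearMap
  Derivation.mk' D <| leibniz_of_leibniz_on_group D fun g h ↦ by
    have D_of (g : G) : D (of R G g) = of R G g • L (.ofMul g) := by simp [D]
    rw [← map_mul, D_of, D_of, D_of, ofMul_mul, map_add, smul_add, map_mul, smul_smul, smul_smul,
      mul_comm, add_comm]

theorem derivationOfGroupLogDeriv_of (L : Additive G →+ M) (g : G) :
    derivationOfGroupLogDeriv L (of R G g) = of R G g • L (.ofMul g) := by
  simp [derivationOfGroupLogDeriv]

end OfLogarithmicDerivative

theorem existsUnique_derivation_of_dual_coordinates {R G M : Type*} [CommRing R] [CommGroup G]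
    [AddCommGroup M] [Module R M] [Module R[G] M] [IsScalarTower R R[G] M] {p : ℕ}
    (hp : (p : R) = 0) (hR : Function.Surjective fun a : R ↦ a ^ p)
    {ι : Type*} [Finite ι] [DecidableEq ι]
    {x : ι → G} (hx : Subgroup.closure (Set.range x) ⊔ (powMonoidHom p).range = ⊤)
    (coord : ι → Additive G →+ R)
    (coord_x : ∀ i j, coord i (.ofMul (x j)) = if i = j then 1 else 0) (c : ι → M) :
    ∃! D : Derivation ℤ R[G] M, ∀ i, D (of R G (x i)) = c i := by
  have := Fintype.ofFinite ι
  let L : Additive G →+ M :=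
    ∑ i, ((smulAddHom R M).flip (of R G (x i)⁻¹ • c i)).comp (coord i)
  have L_x (i : ι) : L (.ofMul (x i)) = of R G (x i)⁻¹ • c i := by
    simp [L, coord_x]
  let D : Derivation ℤ R[G] M := (derivationOfGroupLogDeriv (R := R) L).restrictScalars ℤ
  have D_x (i : ι) : D (of R G (x i)) = c i := by
    rw [Derivation.restrictScalars_apply, derivationOfGroupLogDeriv_of, L_x, smul_smul, ← map_mul,
      mul_inv_cancel, map_one, one_smul]
  refine ⟨D, D_x, fun E E_x ↦ sub_eq_zero.1 ?_⟩
  refine derivation_eq_zero_of_closure_sup_powers_eq_top hp hR hx ?_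
  rintro _ ⟨i, rfl⟩
  rw [Derivation.sub_apply, E_x, D_x, sub_self]

section CyclicFactors

variable {ι H : Type*} [DecidableEq ι] [CommGroup H]

theorem mulSingle_eq_ite {G : ι → Type*} [∀ i, One (G i)] (g : ∀ i, G i) (i : ι) :
    Pi.mulSingle i (g i) = fun j ↦ if j = i then g j else 1 := by
  ext j
  split_ifs with h
  · rw [h, Pi.mulSingle_eq_same]
  · exact Pi.mulSingle_eq_of_ne h _

theorem closure_mulSingle_sup_powers_eq_top [Finite ι] {p : ℕ} (r : ι → ℕ)
    (hH : Function.Surjective fun h : H ↦ h ^ p) :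
    Subgroup.closure (Set.range fun i ↦
        ((1, Pi.mulSingle i (.ofAdd 1)) : H × (∀ i, Multiplicative (ZMod (r i))))) ⊔
      (powMonoidHom p).range = ⊤ := by
  set T := Subgroup.closure (Set.range fun i ↦
    ((1, Pi.mulSingle i (.ofAdd 1)) : H × (∀ i, Multiplicative (ZMod (r i))))) ⊔
      (powMonoidHom p).range
  have mem_left (h : H) : (h, 1) ∈ T := by
    obtain ⟨h, rfl⟩ := hH h
    exact Subgroup.mem_sup_right ⟨(h, 1), by simp⟩
  have mem_right (f : ∀ i, Multiplicative (ZMod (r i))) : (1, f) ∈ T := by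
    refine Subgroup.pi_mem_of_mulSingle_mem (H := T.comap (MonoidHom.inr H _)) f fun i ↦ ?_
    obtain ⟨k, hk⟩ := ZMod.intCast_surjective (f i).toAdd
    have f_i : f i = .ofAdd 1 ^ k := by
      rw [← ofAdd_zsmul, zsmul_one, hk, ofAdd_toAdd]
    have x_i_mem : ((1, Pi.mulSingle i (.ofAdd 1)) : H × (∀ i, Multiplicative (ZMod (r i)))) ∈ T :=
      Subgroup.mem_sup_left <| Subgroup.subset_closure <| Set.mem_range_self i
    rw [f_i, Pi.mulSingle_zpow]
    simpa using zpow_mem x_i_mem k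
  refine (Subgroup.eq_top_iff' T).2 fun g ↦ ?_
  simpa using mul_mem (mem_left g.1) (mem_right g.2)

end CyclicFactors

theorem existsUnique_derivation_of_values_on_generators_general {p : ℕ} {K : Type*} [CommRing K]
    [CharP K p] (hK : Function.Surjective fun a : K ↦ a ^ p)
    {H : Type*} [CommGroup H] (hH : Function.Surjective fun h : H ↦ h ^ p)
    {ι : Type*} [Finite ι] [DecidableEq ι] {r : ι → ℕ} (hr : ∀ i, p ∣ r i)
    (c : ι → K[H × (∀ i, Multiplicative (ZMod (r i)))]) :
    ∃! d : K[H × (∀ i, Multiplicative (ZMod (r i)))] → K[H × (∀ i, Multiplicative (ZMod (r i)))],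
      (∀ a b, d (a + b) = d a + d b) ∧
      (∀ a b, d (a * b) = d a * b + a * d b) ∧
      (∀ i, d (of K _ (1, Pi.mulSingle i (.ofAdd 1))) = c i) := by
  let coord (i : ι) : Additive (H × (∀ i, Multiplicative (ZMod (r i)))) →+ K :=
    AddMonoidHom.mk' (fun g ↦ ZMod.castHom (hr i) K (g.toMul.2 i).toAdd) fun _ _ ↦ map_add _ _ _
  refine existsUnique_fun_of_existsUnique_derivation <|
    existsUnique_derivation_of_dual_coordinates (CharP.cast_eq_zero K p) hK
      (closure_mulSingle_sup_powers_eq_top r hH) coord (fun i j ↦ ?_) c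
  obtain rfl | hij := eq_or_ne i j
  · simp [coord, -ZMod.castHom_apply]
  · simp [coord, hij]

/-- Let `p` be a prime, `K` a finite field of characteristic `p`, `H` a
finite abelian group with `p ∤ |H|`, `n ≥ 1` and `m₁, …, mₙ ≥ 1`, and let
`G = H × C_{p^{m₁}} × ⋯ × C_{p^{mₙ}}`. Let `xᵢ ∈ G` be the element which is the identity
everywhere except in the `i`-th cyclic factor, where it is a fixed generator. Then for any
`c₁, …, cₙ` in the group algebra `K G` there is a unique derivation `d` of `K G` with
`d xᵢ = cᵢ` for all `i`. -/
theorem existsUnique_derivation_of_values_on_generators (p : ℕ) (hp : p.Prime)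
    {K : Type*} [Field K] [Finite K] [CharP K p]
    {H : Type*} [CommGroup H] [Finite H] (hH : ¬ p ∣ Nat.card H)
    (n : ℕ) (hn : 1 ≤ n) (m : Fin n → ℕ) (hm : ∀ i, 1 ≤ m i)
    (c : Fin n → MonoidAlgebra K (H × (∀ i : Fin n, Multiplicative (ZMod (p ^ m i))))) :
    ∃! d : MonoidAlgebra K (H × (∀ i : Fin n, Multiplicative (ZMod (p ^ m i)))) →
           MonoidAlgebra K (H × (∀ i : Fin n, Multiplicative (ZMod (p ^ m i)))),
      (∀ a b, d (a + b) = d a + d b) ∧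
      (∀ a b, d (a * b) = d a * b + a * d b) ∧
      (∀ i : Fin n,
        d (MonoidAlgebra.of K (H × (∀ i : Fin n, Multiplicative (ZMod (p ^ m i))))
            ((1 : H), fun j => if j = i then Multiplicative.ofAdd (1 : ZMod (p ^ m j)) else 1))
          = c i) := by
  have := Fact.mk hp
  simpa only [mulSingle_eq_ite fun j ↦ Multiplicative.ofAdd (1 : ZMod (p ^ m j))] using
    existsUnique_derivation_of_values_on_generators_general (surjective_frobenius K p)
      (powCoprime (hp.coprime_iff_not_dvd.2 hH).symm).surjective
      (fun i ↦ dvd_pow_self p (Nat.one_le_iff_ne_zero.1 (hm i))) c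
end

section
/- Let p be a prime, let K be a finite field of characteristic p, let H be a finite abelian group with p not dividing |H|, let n ≥ 1, let m_1, …, m_n ≥ 1 be natural numbers, and let G = H × C_{p^{m_1}} × ⋯ × C_{p^{m_n}}, where C_{p^{m_i}} is the cyclic group of order p^{m_i}. Then the set Der(KG) of derivations of the group algebra KG is a K-vector space of dimension n · |G|. -/
/-- The `K`-subspace of `K`-linear endomorphisms of a `K`-algebra `A` satisfying the Leibniz
rule, i.e. the space `Der(A)` of (`K`-linear) derivations of `A`. -/
def DerSub (K A : Type*) [CommSemiring K] [Ring A] [Algebra K A] :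
    Submodule K (A →ₗ[K] A) where
  carrier := {d | ∀ a b : A, d (a * b) = d a * b + a * d b}
  zero_mem' := by intro a b; simp
  add_mem' := by
    intro d e hd he a b
    simp only [LinearMap.add_apply, hd a b, he a b, add_mul, mul_add]
    abel
  smul_mem' := by
    intro c d hd a b
    simp only [LinearMap.smul_apply, hd a b, smul_add, smul_mul_assoc, mul_smul_comm]

/-!
For an abelian group `G`, sending a derivation `d` of `K G` to `g ↦ d(g) g⁻¹` identifies `Der(K G)`
with the additive homomorphisms `G → K G`. For `G = H × ∏ C_{qᵢ}` such a homomorphism is a family of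
homomorphisms on the factors: those on `H` vanish because `|H|` acts invertibly on `K G`, and those
on `C_{qᵢ}` are given by an arbitrary value at the generator because `qᵢ` kills `K G`.
Hence `Der(K G) ≃ (K G)ⁿ`.
-/

section MonoidAlgebraSingle

open MonoidAlgebra

theorem single_one_mul_single_inv {K G : Type*} [Semiring K] [Group G] (g : G) :
    (single g 1 * single g⁻¹ 1 : MonoidAlgebra K G) = 1 := by
  rw [single_mul_single, mul_inv_cancel, one_mul, one_def]

theorem basis_constr_single {K G N : Type*} [CommSemiring K] [AddCommMonoid N] [Module K N]
    (f : G → N) (g : G) : (MonoidAlgebra.basis G K).constr K f (single g 1) = f g := by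
  rw [← MonoidAlgebra.basis_apply, Module.Basis.constr_basis]

end MonoidAlgebraSingle

namespace DerSub

theorem mem_iff_forall_basis {K A ι : Type*} [CommSemiring K] [Ring A] [Algebra K A]
    (b : Module.Basis ι K A) {d : A →ₗ[K] A} :
    d ∈ DerSub K A ↔ ∀ i j, d (b i * b j) = d (b i) * b j + b i * d (b j) := by
  refine ⟨fun hd i j => hd (b i) (b j), fun hd x y => ?_⟩
  have bilinear_eq : (LinearMap.mul K A).compr₂ d =
      (LinearMap.mul K A).comp d + (LinearMap.mul K A).compl₂ d :=
    LinearMap.ext_basis b b hd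
  exact LinearMap.congr_fun₂ bilinear_eq x y

section GroupAlgebra

open MonoidAlgebra

theorem mem_of_apply_single {K G : Type*} [CommRing K] [CommMonoid G]
    (φ : Additive G →+ MonoidAlgebra K G) {d : MonoidAlgebra K G →ₗ[K] MonoidAlgebra K G}
    (hd : ∀ g, d (single g 1) = φ (.ofMul g) * single g 1) : d ∈ DerSub K (MonoidAlgebra K G) := by
  refine (mem_iff_forall_basis (MonoidAlgebra.basis G K)).mpr fun g h => ?_
  have single_mul : (single (g * h) 1 : MonoidAlgebra K G) = single g 1 * single h 1 := by
    rw [single_mul_single, one_mul]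
  simp only [MonoidAlgebra.basis_apply]
  rw [← single_mul, hd, hd, hd, ofMul_mul, map_add, single_mul]
  ring

variable {K G : Type*} [CommRing K] [CommGroup G]

/-- The logarithmic derivative `g ↦ d(g) g⁻¹` of a derivation `d` of the group algebra `K G`. -/
noncomputable def logDeriv (d : DerSub K (MonoidAlgebra K G)) :
    Additive G →+ MonoidAlgebra K G :=
  AddMonoidHom.mk' (fun g => d.1 (single g.toMul 1) * single g.toMul⁻¹ 1) fun g h => by
    have leibniz : d.1 (single (g.toMul * h.toMul) 1) =
        d.1 (single g.toMul 1) * single h.toMul 1 + single g.toMul 1 * d.1 (single h.toMul 1) := by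
      simpa only [single_mul_single, one_mul] using d.2 (single g.toMul 1) (single h.toMul 1)
    have single_inv : (single (g.toMul * h.toMul)⁻¹ 1 : MonoidAlgebra K G) =
        single g.toMul⁻¹ 1 * single h.toMul⁻¹ 1 := by
      rw [single_mul_single, one_mul, mul_inv]
    rw [toMul_add, leibniz, single_inv]
    linear_combination
      d.1 (single g.toMul 1) * single g.toMul⁻¹ 1 * single_one_mul_single_inv (K := K) h.toMul +
        d.1 (single h.toMul 1) * single h.toMul⁻¹ 1 * single_one_mul_single_inv (K := K) g.toMul

theorem logDeriv_apply (d : DerSub K (MonoidAlgebra K G)) (g : Additive G) :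
    logDeriv d g = d.1 (single g.toMul 1) * single g.toMul⁻¹ 1 :=
  rfl

/-- The derivation `g ↦ φ(g) g` of the group algebra `K G` with logarithmic derivative `φ`. -/
noncomputable def ofLogDeriv (φ : Additive G →+ MonoidAlgebra K G) :
    DerSub K (MonoidAlgebra K G) :=
  ⟨(MonoidAlgebra.basis G K).constr K fun g => φ (.ofMul g) * single g 1,
    mem_of_apply_single φ (basis_constr_single _)⟩

theorem ofLogDeriv_single (φ : Additive G →+ MonoidAlgebra K G) (g : G) :
    (ofLogDeriv φ).1 (single g 1) = φ (.ofMul g) * single g 1 :=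
  basis_constr_single _ g

/-- Derivations of the group algebra `K G` of an abelian group correspond to additive homomorphisms
`G → K G` through the logarithmic derivative. -/
noncomputable def logDerivEquiv :
    DerSub K (MonoidAlgebra K G) ≃ₗ[K] (Additive G →+ MonoidAlgebra K G) where
  toFun := logDeriv
  invFun := ofLogDeriv
  map_add' d e := AddMonoidHom.ext fun g =>
    add_mul (d.1 (single g.toMul 1)) (e.1 (single g.toMul 1)) _
  map_smul' c d := AddMonoidHom.ext fun g =>
    smul_mul_assoc c (d.1 (single g.toMul 1)) _
  left_inv d := Subtype.ext <| (MonoidAlgebra.basis G K).ext fun g => by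
    rw [MonoidAlgebra.basis_apply, ofLogDeriv_single, logDeriv_apply, toMul_ofMul, mul_assoc,
      mul_comm (single g⁻¹ 1), single_one_mul_single_inv, mul_one]
  right_inv φ := AddMonoidHom.ext fun g => by
    rw [logDeriv_apply, ofLogDeriv_single, ofMul_toMul, mul_assoc, single_one_mul_single_inv,
      mul_one]

end GroupAlgebra

end DerSub

section AdditiveHoms

variable {K M : Type*}

/-- Additive homomorphisms out of a finite product of commutative monoids are families of additive
homomorphisms out of the factors. -/
def additiveHomProdPiEquiv [Semiring K] [AddCommMonoid M] [Module K M] {ι : Type*} [Fintype ι]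
    [DecidableEq ι] (H : Type*) [CommMonoid H] (C : ι → Type*) [∀ i, CommMonoid (C i)] :
    (Additive (H × ∀ i, C i) →+ M) ≃ₗ[K] (Additive H →+ M) × ∀ i, Additive (C i) →+ M :=
  let factors : Additive (H × ∀ i, C i) ≃+ Additive H × ∀ i, Additive (C i) :=
    (AddEquiv.prodAdditive H _).trans ((AddEquiv.refl _).prodCongr (AddEquiv.piAdditive C))
  addMonoidHomLequivNat K ≪≫ₗ factors.toNatLinearEquiv.congrLeft M K ≪≫ₗ
    (LinearMap.coprodEquiv K).symm ≪≫ₗ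
    (addMonoidHomLequivNat K).symm.prodCongr
      ((LinearMap.lsum ℕ (fun i => Additive (C i)) K).symm ≪≫ₗ
        LinearEquiv.piCongrRight fun _ => (addMonoidHomLequivNat K).symm)

theorem subsingleton_addMonoidHom_of_isUnit_card [Semiring K] [AddCommMonoid M] [Module K M]
    {A : Type*} [AddGroup A] (hA : IsUnit (Nat.card A : K)) : Subsingleton (A →+ M) :=
  subsingleton_of_forall_eq 0 fun φ => by
    ext a
    refine hA.smul_eq_zero.mp ?_
    rw [Nat.cast_smul_eq_nsmul, ← map_nsmul, card_nsmul_eq_zero', map_zero]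

/-- An additive homomorphism from the cyclic group of order `q` into a module killed by `q` is
determined by its value at the generator, which is arbitrary. -/
def zmodHomEquiv [Semiring K] [AddCommGroup M] [Module K M] {q : ℕ} (hq : (q : K) = 0) :
    (Additive (Multiplicative (ZMod q)) →+ M) ≃ₗ[K] M where
  toFun φ := φ (.ofMul (.ofAdd 1))
  invFun x := (ZMod.lift q ⟨zmultiplesHom M x, by
    rw [zmultiplesHom_apply, natCast_zsmul, ← Nat.cast_smul_eq_nsmul K, hq, zero_smul]⟩).comp
      (AddEquiv.additiveMultiplicative (ZMod q)).toAddMonoidHom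
  map_add' _ _ := rfl
  map_smul' _ _ := rfl
  left_inv φ := AddMonoidHom.ext fun a => by
    obtain ⟨k, hk⟩ := ZMod.intCast_surjective a.toMul.toAdd
    obtain rfl : k • .ofMul (.ofAdd 1) = a := by
      rw [← ofMul_zpow, ← ofAdd_zsmul, zsmul_one, hk]
      rfl
    simp
  right_inv x := by
    simpa using ZMod.lift_coe q ⟨zmultiplesHom M x, _⟩ (1 : ℤ)

end AdditiveHoms

theorem finrank_derivations_finite_abelian_groupAlgebra_general
    {K : Type*} [CommRing K] [Nontrivial K]
    {H : Type*} [CommGroup H] [Finite H] (hH : IsUnit (Nat.card H : K))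
    {ι : Type*} [Finite ι] (q : ι → ℕ) [∀ i, NeZero (q i)] (hq : ∀ i, (q i : K) = 0) :
    Module.finrank K (DerSub K (MonoidAlgebra K (H × (∀ i, Multiplicative (ZMod (q i)))))) =
      Nat.card ι * Nat.card (H × (∀ i, Multiplicative (ZMod (q i)))) := by
  classical
  have := Fintype.ofFinite ι
  set G := H × (∀ i, Multiplicative (ZMod (q i)))
  have : ∀ i, Finite (Multiplicative (ZMod (q i))) := fun i => inferInstanceAs (Finite (ZMod (q i)))
  have : Subsingleton (Additive H →+ MonoidAlgebra K G) :=
    subsingleton_addMonoidHom_of_isUnit_card hH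
  let _ : Unique (Additive H →+ MonoidAlgebra K G) := uniqueOfSubsingleton 0
  let derivations : DerSub K (MonoidAlgebra K G) ≃ₗ[K] (ι → MonoidAlgebra K G) :=
    DerSub.logDerivEquiv ≪≫ₗ additiveHomProdPiEquiv H _ ≪≫ₗ LinearEquiv.uniqueProd ≪≫ₗ
      LinearEquiv.piCongrRight fun i => zmodHomEquiv (hq i)
  calc Module.finrank K (DerSub K (MonoidAlgebra K G))
      = Module.finrank K (ι → MonoidAlgebra K G) := derivations.finrank_eq
    _ = Nat.card ι * Module.finrank K (MonoidAlgebra K G) := by simp [Module.finrank_pi_fintype]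
    _ = Nat.card ι * Nat.card G := by
      rw [Module.finrank_eq_nat_card_basis (MonoidAlgebra.basis G K)]

/-- Let `p` be a prime, `K` a finite field of characteristic `p`, `H` a
finite abelian group with `p ∤ |H|`, `n ≥ 1` and `m₁, …, mₙ ≥ 1`, and let
`G = H × C_{p^{m₁}} × ⋯ × C_{p^{mₙ}}`. Then the space `Der(K G)` of derivations of the group
algebra `K G` is a `K`-vector space of dimension `n · |G|`. -/
theorem finrank_derivations_finite_abelian_groupAlgebra (p : ℕ) (hp : p.Prime)
    {K : Type*} [Field K] [Finite K] [CharP K p]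
    {H : Type*} [CommGroup H] [Finite H] (hH : ¬ p ∣ Nat.card H)
    (n : ℕ) (hn : 1 ≤ n) (m : Fin n → ℕ) (hm : ∀ i, 1 ≤ m i) :
    Module.finrank K
        (DerSub K (MonoidAlgebra K (H × (∀ i : Fin n, Multiplicative (ZMod (p ^ m i)))))) =
      n * Nat.card (H × (∀ i : Fin n, Multiplicative (ZMod (p ^ m i)))) := by
  have : ∀ i, NeZero (p ^ m i) := fun i => ⟨pow_ne_zero _ hp.ne_zero⟩
  have hq : ∀ i, ((p ^ m i : ℕ) : K) = 0 := fun i => by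
    rw [Nat.cast_pow, CharP.cast_eq_zero, zero_pow (Nat.one_le_iff_ne_zero.mp (hm i))]
  simpa only [Nat.card_fin] using finrank_derivations_finite_abelian_groupAlgebra_general
    ((CharP.isUnit_natCast_iff hp).mpr hH) (fun i => p ^ m i) hq
end

section
/- Let n > 2 be an integer, let m ≥ 1, and let K = F_{2^m} be a finite field with 2^m elements. Let C(y) and C(xy) denote the centralizers in the group algebra K D_{2n} of the elements y and xy of the dihedral group D_{2n}. Then C(y) and C(xy) are K-subspaces of K D_{2n}, each of dimension 2⌊n/2⌋ + 2 (that is, n + 2 when n is even and n + 1 when n is odd). -/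
/-!
An element of `R[G]` commutes with `g` exactly when its coefficients are constant on the orbits of
conjugation by `g`, so the centralizer of `g` is free of rank the number of these orbits. By
Burnside's lemma this rank times the order of `g` is the sum of the orders of the centralizers of
the powers `g ^ k` in `G`. A reflection of `D_{2n}` has order `2` and commutes with `2 * gcd n 2`
elements, whence the rank is `(2 * n + 2 * gcd n 2) / 2 = n + gcd n 2`.
-/

section Orbits

open MulAction

variable {Γ X : Type*} [Group Γ] [MulAction Γ X]

theorem orbitRel_closure_le_iff {S : Set Γ} {s : Setoid X} :
    orbitRel (Subgroup.closure S) X ≤ s ↔ ∀ γ ∈ S, ∀ x, s (γ • x) x := by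
  constructor
  · intro h γ hγ x
    exact h ⟨⟨γ, Subgroup.subset_closure hγ⟩, rfl⟩
  · rintro h _ x ⟨⟨γ, hγ⟩, rfl⟩
    suffices ∀ x, s (γ • x) x from this x
    induction hγ using Subgroup.closure_induction with
    | mem γ hγ => exact h γ hγ
    | one => simpa only [one_smul] using s.refl'
    | mul γ δ _ _ ihγ ihδ =>
      intro x
      simpa only [mul_smul] using s.trans' (ihγ (δ • x)) (ihδ x)
    | inv γ _ ih =>
      intro x
      simpa only [smul_inv_smul] using s.symm' (ih (γ⁻¹ • x))

theorem card_orbits_zpowers_mul_orderOf [Finite X] {γ : Γ} (hγ : IsOfFinOrder γ) :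
    Nat.card (orbitRel.Quotient (Subgroup.zpowers γ) X) * orderOf γ =
      ∑ k ∈ Finset.range (orderOf γ), Nat.card (fixedBy X (γ ^ k)) := by
  classical
  have := Fintype.ofFinite X
  have := Fintype.ofEquiv _ (finEquivZPowers hγ)
  have := Fintype.ofFinite (orbitRel.Quotient (Subgroup.zpowers γ) X)
  have burnside := sum_card_fixedBy_eq_card_orbits_mul_card_group (Subgroup.zpowers γ) X
  simp only [← Nat.card_eq_fintype_card, Nat.card_zpowers] at burnside
  rw [← burnside, Finset.sum_range]
  exact (Fintype.sum_equiv (finEquivZPowers hγ) _ _ fun _ ↦ rfl).symm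

end Orbits

theorem mem_range_funLeft_quotientMk_iff {R M X : Type*} [Semiring R] [AddCommMonoid M] [Module R M]
    {s : Setoid X} {f : X → M} :
    f ∈ (LinearMap.funLeft R M (Quotient.mk s)).range ↔ s ≤ Setoid.ker f := by
  constructor
  · rintro ⟨f, rfl⟩ x y hxy
    exact congrArg f (Quotient.sound hxy)
  · intro h
    exact ⟨Quotient.lift f fun _ _ hxy ↦ h hxy, rfl⟩

theorem finrank_range_funLeft_quotientMk {R X : Type*} [Semiring R] [StrongRankCondition R]
    [Finite X] (s : Setoid X) :
    Module.finrank R (LinearMap.funLeft R R (Quotient.mk s)).range = Nat.card (Quotient s) := by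
  have := Fintype.ofFinite (Quotient s)
  rw [LinearMap.finrank_range_of_inj
      (LinearMap.funLeft_injective_of_surjective R R _ Quotient.mk_surjective),
    Module.finrank_fintype_fun_eq_card, Nat.card_eq_fintype_card]

section GroupAlgebra

open ConjAct MulAction

variable {R G : Type*} [CommSemiring R] [Group G]

theorem fixedBy_toConjAct (g : G) :
    fixedBy G (toConjAct g) = Subgroup.centralizer {g} := by
  ext h
  rw [mem_fixedBy, toConjAct_smul, mul_inv_eq_iff_eq_mul, SetLike.mem_coe,
    Subgroup.mem_centralizer_singleton_iff, eq_comm]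

theorem mem_centralizer_image_of_iff {S : Set G} {a : MonoidAlgebra R G} :
    a ∈ Subalgebra.centralizer R (MonoidAlgebra.of R G '' S) ↔
      ∀ g ∈ S, ∀ h, a.coeff (g * h * g⁻¹) = a.coeff h := by
  simp only [Subalgebra.mem_centralizer_iff, Set.forall_mem_image]
  refine forall₂_congr fun g _ ↦ ?_
  rw [← MonoidAlgebra.coeff_inj, Finsupp.ext_iff, (Equiv.mulLeft g).surjective.forall]
  simp [MonoidAlgebra.coeff_single_mul_apply, MonoidAlgebra.coeff_mul_single_apply, eq_comm]

variable [StrongRankCondition R] [Finite G]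

theorem finrank_centralizer_image_of (S : Set G) :
    Module.finrank R (Subalgebra.centralizer R (MonoidAlgebra.of R G '' S)) =
      Nat.card (orbitRel.Quotient (Subgroup.closure (toConjAct '' S)) G) := by
  let e : MonoidAlgebra R G ≃ₗ[R] (G → R) :=
    MonoidAlgebra.coeffLinearEquiv R ≪≫ₗ Finsupp.linearEquivFunOnFinite R R G
  have map_centralizer_eq_range :
      (Subalgebra.centralizer R (MonoidAlgebra.of R G '' S)).toSubmodule.map e.toLinearMap =
        (LinearMap.funLeft R R (Quotient.mk
          (orbitRel (Subgroup.closure (toConjAct '' S)) G))).range := by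
    ext f
    obtain ⟨a, rfl⟩ := e.surjective f
    rw [Submodule.mem_map_equiv, e.symm_apply_apply, Subalgebra.mem_toSubmodule,
      mem_range_funLeft_quotientMk_iff, orbitRel_closure_le_iff, Set.forall_mem_image]
    exact mem_centralizer_image_of_iff
  rw [← Subalgebra.finrank_toSubmodule, ← e.finrank_map_eq, map_centralizer_eq_range,
    finrank_range_funLeft_quotientMk]

theorem finrank_centralizer_singleton_of_mul_orderOf (g : G) :
    Module.finrank R (Subalgebra.centralizer R {MonoidAlgebra.of R G g}) * orderOf g =
      ∑ k ∈ Finset.range (orderOf g), Nat.card (Subgroup.centralizer {g ^ k}) := by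
  have orderOf_toConjAct : orderOf (toConjAct g) = orderOf g := MulEquiv.orderOf_eq toConjAct g
  have isOfFinOrder_toConjAct : IsOfFinOrder (toConjAct g) :=
    toConjAct.toMonoidHom.isOfFinOrder (isOfFinOrder_of_finite g)
  have finrank_eq := finrank_centralizer_image_of (R := R) {g}
  rw [Set.image_singleton, Set.image_singleton, ← Subgroup.zpowers_eq_closure] at finrank_eq
  rw [finrank_eq, ← orderOf_toConjAct, card_orbits_zpowers_mul_orderOf isOfFinOrder_toConjAct]
  simp only [← map_pow, fixedBy_toConjAct]
  rfl

end GroupAlgebra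

section Dihedral

open DihedralGroup

variable {n : ℕ}

theorem r_mem_centralizer_sr_iff {c i : ZMod n} :
    r i ∈ Subgroup.centralizer {sr c} ↔ 2 • i = 0 := by
  rw [Subgroup.mem_centralizer_singleton_iff, r_mul_sr, sr_mul_r, sr.injEq]
  grind

theorem sr_mem_centralizer_sr_iff {c i : ZMod n} :
    sr i ∈ Subgroup.centralizer {sr c} ↔ 2 • (i - c) = 0 := by
  rw [Subgroup.mem_centralizer_singleton_iff, sr_mul_sr, sr_mul_sr, r.injEq]
  grind

theorem card_centralizer_sr [NeZero n] (c : ZMod n) :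
    Nat.card (Subgroup.centralizer {sr c}) = 2 * n.gcd 2 := by
  have e : Subgroup.centralizer {sr c} ≃
      {i : ZMod n // 2 • i = 0} ⊕ {i : ZMod n // 2 • i = 0} :=
    ((equivSum.symm.subtypeEquiv fun _ ↦ Iff.rfl).symm.trans Equiv.subtypeSum).trans <|
      .sumCongr (.subtypeEquivRight fun _ ↦ r_mem_centralizer_sr_iff)
        ((Equiv.subRight c).subtypeEquiv fun _ ↦ sr_mem_centralizer_sr_iff)
  have card_two_torsion : Nat.card {i : ZMod n // 2 • i = 0} = n.gcd 2 := by
    simpa using IsAddCyclic.card_nsmulAddMonoidHom_ker (ZMod n) 2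
  rw [Nat.card_congr e, Nat.card_sum, card_two_torsion, two_mul]

theorem finrank_centralizers_groupAlgebra_dihedral_general [NeZero n] {R : Type*} [CommSemiring R]
    [StrongRankCondition R] (c : ZMod n) :
    Module.finrank R (Subalgebra.centralizer R {MonoidAlgebra.of R (DihedralGroup n) (sr c)}) =
      2 * (n / 2) + 2 := by
  have centralizer_one : Subgroup.centralizer {(1 : DihedralGroup n)} = ⊤ := by
    ext
    simp [Subgroup.mem_centralizer_singleton_iff]
  have burnside := finrank_centralizer_singleton_of_mul_orderOf (R := R) (sr c)
  rw [orderOf_sr, Finset.sum_range_succ, Finset.sum_range_one, pow_zero, pow_one,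
    card_centralizer_sr, centralizer_one, Subgroup.card_top, nat_card] at burnside
  have gcd_eq : n.gcd 2 = 2 - n % 2 := by
    rw [Nat.gcd_comm, Nat.gcd_rec]
    rcases Nat.mod_two_eq_zero_or_one n with h | h <;> simp [h]
  omega

end Dihedral

open DihedralGroup in
/-- Let `n > 2` and let `K` be a finite field with `2 ^ m` elements
(`m ≥ 1`). The centralizers `C(y)` and `C(xy)` in the group algebra `K D_{2n}` of the
elements `y = sr 0` and `x * y = r 1 * sr 0` of the dihedral group of order `2n` are
`K`-subspaces of `K D_{2n}` of dimension `2⌊n/2⌋ + 2` each. -/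
theorem finrank_centralizers_groupAlgebra_dihedral (n : ℕ) (hn : 2 < n)
    (m : ℕ) (hm : 1 ≤ m) {K : Type*} [Field K] [Fintype K] (hK : Fintype.card K = 2 ^ m) :
    Module.finrank K
        (Subalgebra.centralizer K
          ({MonoidAlgebra.of K (DihedralGroup n) (sr 0)} :
            Set (MonoidAlgebra K (DihedralGroup n)))) = 2 * (n / 2) + 2 ∧
    Module.finrank K
        (Subalgebra.centralizer K
          ({MonoidAlgebra.of K (DihedralGroup n) (r 1 * sr 0)} :
            Set (MonoidAlgebra K (DihedralGroup n)))) = 2 * (n / 2) + 2 := by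
  have : NeZero n := ⟨by omega⟩
  rw [r_mul_sr]
  exact ⟨finrank_centralizers_groupAlgebra_dihedral_general 0,
    finrank_centralizers_groupAlgebra_dihedral_general (0 - 1)⟩
end

section
/- Let n > 2 be an odd integer, let m ≥ 1, and let K = F_{2^m} be a finite field with 2^m elements. Then the set Der(K D_{2n}) of derivations of the group algebra of the dihedral group D_{2n} of order 2n is a K-vector space of dimension (3n + 1)/2. -/
/-!
Write `c (g, x)` for the coefficient of `g * x` in `d g`. The Leibniz rule on the basis `G` of
`K[G]` says that `c` is an additive cocycle on the groupoid of `G` acting on itself by conjugation.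
This groupoid is equivalent to the disjoint union of the centralizers of representatives of the
conjugacy classes, so cocycles modulo coboundaries are `∏ Hom(C_G(g), K)`, while the potentials with
zero coboundary are the class functions. Hence
`dim Der(K[G]) = |G| - #classes + ∑ dim Hom(C_G(g), K)`.

For `G = D_{2n}` with `n` odd and `K` of characteristic two, a homomorphism to `K` kills rotations,
as these have odd order. So only the two classes whose centralizers contain a reflection, that of
`1` and that of the reflections, contribute to the sum, each with dimension one. As there are
`(n + 3) / 2` classes, the dimension is `2n - (n + 3) / 2 + 2 = (3n + 1) / 2`.
-/

theorem DerSub.mem_iff_basis {K A ι : Type*} [CommSemiring K] [Ring A] [Algebra K A]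
    (b : Module.Basis ι K A) {d : A →ₗ[K] A} :
    d ∈ DerSub K A ↔ ∀ i j, d (b i * b j) = d (b i) * b j + b i * d (b j) := by
  refine ⟨fun hd i j => hd _ _, fun hd x y => ?_⟩
  have key : (LinearMap.mul K A).compr₂ d =
      (LinearMap.mul K A).comp d + (LinearMap.mul K A).compl₂ d :=
    LinearMap.ext_basis b b hd
  exact LinearMap.congr_fun₂ key x y

section Hom

variable (K : Type*)

instance finite_addMonoidHom [Ring K] [IsNoetherianRing K] (A : Type*) [AddMonoid A] [Finite A] :
    Module.Finite K (A →+ K) :=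
  Module.Finite.of_injective
    ({ toFun := fun φ => φ, map_add' := fun _ _ => rfl, map_smul' := fun _ _ => rfl } :
      (A →+ K) →ₗ[K] A → K) DFunLike.coe_injective

theorem finrank_addMonoidHom_congr [Semiring K] {M N : Type*} [Monoid M] [Monoid N] (e : M ≃* N) :
    Module.finrank K (Additive M →+ K) = Module.finrank K (Additive N →+ K) :=
  LinearEquiv.finrank_eq
    { e.toAdditive.addMonoidHomCongrLeft with map_smul' := fun _ _ => rfl }

end Hom

/-- The `K`-valued additive cocycles of an action of `G` on `X`, that is, the functors to `K` from
the action groupoid, whose arrows `x ⟶ g • x` are the pairs `(g, x)`. -/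
def actionCocycles (K G X : Type*) [Semiring K] [Group G] [MulAction G X] :
    Submodule K (G → X → K) where
  carrier := {c | ∀ g h x, c (g * h) x = c g (h • x) + c h x}
  zero_mem' := by simp
  add_mem' := by
    intro c c' hc hc' g h x
    simp only [Pi.add_apply, hc g h x, hc' g h x]
    abel
  smul_mem' := by
    intro a c hc g h x
    simp only [Pi.smul_apply, hc g h x, smul_add]

namespace actionCocycles

open MulAction

section Maps

variable {K G X ι : Type*} [Ring K] [Group G] [MulAction G X]

/-- The cocycle of differences of a potential `f` along the arrows of the action groupoid. -/
def coboundary : (X → K) →ₗ[K] actionCocycles K G X where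
  toFun f := ⟨fun g x => f (g • x) - f x, fun g h x => by simp [mul_smul]⟩
  map_add' f f' := by ext g x; simp [add_sub_add_comm]
  map_smul' a f := by ext g x; simp [mul_sub]

/-- Restriction of cocycles to the stabilizers of the points `s i`, on which they are additive
characters. -/
def restrictStabilizers (s : ι → X) :
    actionCocycles K G X →ₗ[K] (i : ι) → (Additive (stabilizer G (s i)) →+ K) where
  toFun c i := AddMonoidHom.mk' (fun g => c.1 g.toMul (s i)) fun g h => by
    rw [toMul_add, Subgroup.coe_mul, c.2, mem_stabilizer_iff.mp h.toMul.2]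
  map_add' _ _ := rfl
  map_smul' _ _ := rfl

theorem coboundary_apply (f : X → K) (g : G) (x : X) :
    (coboundary f).1 g x = f (g • x) - f x := rfl

theorem restrictStabilizers_apply (s : ι → X) (c : actionCocycles K G X) (i : ι)
    (g : Additive (stabilizer G (s i))) :
    restrictStabilizers s c i g = c.1 g.toMul (s i) := rfl

-- `q` labels the orbits by `ι` and `s` chooses a base point in each of them.
variable {q : X → ι} (hq : ∀ x y, q x = q y ↔ x ∈ orbit G y)
  {s : ι → X} (hs : Function.RightInverse s q)

include hq

theorem label_smul (g : G) (x : X) : q (g • x) = q x :=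
  (hq _ _).mpr (mem_orbit x g)

theorem transport_loop_mem_stabilizer {t : X → G} (ht : ∀ x, t x • s (q x) = x) (g : G) (x : X) :
    (t (g • x))⁻¹ * (g * t x) ∈ stabilizer G (s (q x)) := by
  rw [mem_stabilizer_iff, mul_smul, mul_smul, ht, inv_smul_eq_iff]
  simpa only [label_smul hq] using (ht (g • x)).symm

include hs

theorem exists_transport : ∃ t : X → G, ∀ x, t x • s (q x) = x :=
  Classical.skolem.mp fun x => (hq x _).mp (hs (q x)).symm

theorem ker_coboundary :
    LinearMap.ker (coboundary : (X → K) →ₗ[K] actionCocycles K G X) =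
      LinearMap.range (LinearMap.funLeft K K q) := by
  ext f
  constructor
  · intro hf
    have hf_smul : ∀ (g : G) x, f (g • x) = f x := fun g x =>
      sub_eq_zero.mp (congrFun₂ (congrArg Subtype.val hf) g x)
    obtain ⟨t, ht⟩ := exists_transport hq hs
    refine ⟨f ∘ s, funext fun x => ?_⟩
    rw [LinearMap.funLeft_apply, Function.comp_apply, ← hf_smul (t x), ht]
  · rintro ⟨a, rfl⟩
    ext g x
    simp [coboundary_apply, LinearMap.funLeft_apply, label_smul hq]

theorem ker_restrictStabilizers :
    LinearMap.ker (restrictStabilizers (K := K) (G := G) s) = LinearMap.range coboundary := by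
  ext c
  constructor
  · intro hc
    have hc_stab : ∀ i, ∀ g ∈ stabilizer G (s i), c.1 g (s i) = 0 := fun i g hg =>
      DFunLike.congr_fun (congrFun hc i) (Additive.ofMul ⟨g, hg⟩)
    obtain ⟨t, ht⟩ := exists_transport hq hs
    refine ⟨fun x => c.1 (t x) (s (q x)), Subtype.ext <| funext₂ fun g x => ?_⟩
    rw [coboundary_apply, label_smul hq, sub_eq_iff_eq_add]
    set l := (t (g • x))⁻¹ * (g * t x)
    have hl : l ∈ stabilizer G (s (q x)) := transport_loop_mem_stabilizer hq ht g x
    calc c.1 (t (g • x)) (s (q x))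
        = c.1 (t (g • x) * l) (s (q x)) := by
          rw [c.2, mem_stabilizer_iff.mp hl, hc_stab _ l hl, add_zero]
      _ = c.1 (g * t x) (s (q x)) := by rw [mul_inv_cancel_left]
      _ = c.1 g x + c.1 (t x) (s (q x)) := by rw [c.2, ht]
  · rintro ⟨f, rfl⟩
    ext i g
    simp [coboundary_apply, restrictStabilizers_apply, mem_stabilizer_iff.mp g.2]

theorem restrictStabilizers_surjective :
    Function.Surjective (restrictStabilizers (K := K) (G := G) s) := by
  intro χ
  obtain ⟨t, ht⟩ := exists_transport hq hs
  let χ₀ (i : ι) : G → K := Function.extend Subtype.val (fun g => χ i (.ofMul g)) 0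
  have χ₀_coe (i : ι) (g : stabilizer G (s i)) : χ₀ i g = χ i (.ofMul g) :=
    Subtype.val_injective.extend_apply _ _ g
  have χ₀_mul (i : ι) {g h : G} (hg : g ∈ stabilizer G (s i)) (hh : h ∈ stabilizer G (s i)) :
      χ₀ i (g * h) = χ₀ i g + χ₀ i h := by
    lift g to stabilizer G (s i) using hg
    lift h to stabilizer G (s i) using hh
    rw [← Subgroup.coe_mul, χ₀_coe, χ₀_coe, χ₀_coe, ofMul_mul, map_add]
  -- Evaluate the character of the orbit of `x` on the loop based at `s (q x)` that runs along
  -- `t x`, then `g`, then `t (g • x)` backwards.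
  refine ⟨⟨fun g x => χ₀ (q x) ((t (g • x))⁻¹ * (g * t x)), fun g h x => ?_⟩, ?_⟩
  · have hloop := transport_loop_mem_stabilizer hq ht g (h • x)
    simp only [label_smul hq] at hloop ⊢
    rw [← χ₀_mul _ hloop (transport_loop_mem_stabilizer hq ht h x), ← mul_smul]
    congr 1
    group
  · ext i g
    have ht_mem : t (s i) ∈ stabilizer G (s i) := by
      simpa only [mem_stabilizer_iff, hs i] using ht (s i)
    have hloop := transport_loop_mem_stabilizer hq ht g (s i)
    have hg : (g : G) • s i = s i := g.2
    simp only [hs i, hg] at hloop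
    have hconj :
        χ₀ i (t (s i)) + χ₀ i ((t (s i))⁻¹ * (g * t (s i))) = χ₀ i g + χ₀ i (t (s i)) := by
      rw [← χ₀_mul i ht_mem hloop, mul_inv_cancel_left, χ₀_mul i g.2 ht_mem]
    rw [add_comm (χ₀ i g), add_right_inj, χ₀_coe] at hconj
    simpa [restrictStabilizers_apply, hs i, hg] using hconj

end Maps

section Finrank

variable {K G X ι : Type*} [DivisionRing K] [Group G] [Finite G] [MulAction G X] [Finite X]
  [Fintype ι]

/-- This is the dimension count for the exact sequence
`0 → (ι → K) → (X → K) → cocycles → ∏ᵢ Hom(Stab (s i), K) → 0`. -/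
theorem finrank_add_card {q : X → ι} (hq : ∀ x y, q x = q y ↔ x ∈ orbit G y)
    {s : ι → X} (hs : Function.RightInverse s q) :
    Module.finrank K (actionCocycles K G X) + Fintype.card ι =
      Nat.card X + ∑ i, Module.finrank K (Additive (stabilizer G (s i)) →+ K) := by
  have := Fintype.ofFinite X
  have hrestrict := LinearMap.finrank_range_add_finrank_ker
    (restrictStabilizers (K := K) (G := G) s)
  rw [LinearMap.range_eq_top.mpr (restrictStabilizers_surjective hq hs), finrank_top,
    Module.finrank_pi_fintype, ker_restrictStabilizers hq hs] at hrestrict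
  have hcob := LinearMap.finrank_range_add_finrank_ker
    (coboundary : (X → K) →ₗ[K] actionCocycles K G X)
  rw [ker_coboundary hq hs, LinearMap.finrank_range_of_inj
    (LinearMap.funLeft_injective_of_surjective K K q hs.surjective),
    Module.finrank_fintype_fun_eq_card, Module.finrank_fintype_fun_eq_card,
    ← Nat.card_eq_fintype_card (α := X)] at hcob
  omega

end Finrank

end actionCocycles

section Derivation

open ConjAct

variable {K G : Type*} [Group G]

/-- The centralizer of `g`, viewed as the stabilizer of `g` under conjugation. -/
def centralizerEquivStabilizer (g : G) :
    Subgroup.centralizer {g} ≃* MulAction.stabilizer (ConjAct G) g where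
  __ := toConjAct.toEquiv.subtypeEquiv fun h => by
    rw [Subgroup.centralizer_eq_comap_stabilizer]
    rfl
  map_mul' _ _ := rfl

section CommRing

variable [CommRing K] [Finite G]

variable (K G) in
/-- Linear endomorphisms `d` of `K[G]` as functions on pairs `(g, x)`: the value at `(g, x)` is the
coefficient of `g * x` in `d g`. With this normalisation, derivations become cocycles for the
conjugation action. -/
noncomputable def endEquivFun :
    (MonoidAlgebra K G →ₗ[K] MonoidAlgebra K G) ≃ₗ[K] (ConjAct G → G → K) :=
  (((MonoidAlgebra.basis G K).reindex toConjAct.toEquiv).constr K).symm ≪≫ₗ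
    LinearEquiv.piCongrRight fun g =>
      MonoidAlgebra.coeffLinearEquiv K ≪≫ₗ Finsupp.linearEquivFunOnFinite K K G ≪≫ₗ
        LinearEquiv.funCongrLeft K K (Equiv.mulLeft (ofConjAct g))

theorem endEquivFun_apply (d : MonoidAlgebra K G →ₗ[K] MonoidAlgebra K G) (g : ConjAct G) (x : G) :
    endEquivFun K G d g x = (d (.single (ofConjAct g) 1)).coeff (ofConjAct g * x) := by
  simp [endEquivFun, LinearMap.funLeft_apply, Module.Basis.constr, MonoidAlgebra.basis_apply]

theorem endEquivFun_mem_actionCocycles_iff (d : MonoidAlgebra K G →ₗ[K] MonoidAlgebra K G) :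
    endEquivFun K G d ∈ actionCocycles K (ConjAct G) G ↔ d ∈ DerSub K (MonoidAlgebra K G) := by
  rw [DerSub.mem_iff_basis (MonoidAlgebra.basis G K)]
  refine (ConjAct.forall _).trans <| forall_congr' fun g =>
    (ConjAct.forall _).trans <| forall_congr' fun h => ?_
  rw [← MonoidAlgebra.coeff_inj, DFunLike.ext_iff]
  refine (forall_congr' fun x => ?_).trans (Equiv.mulLeft (g * h)).forall_congr_right
  simp [endEquivFun_apply, MonoidAlgebra.basis_apply, MonoidAlgebra.single_mul_single, smul_def,
    mul_assoc]

theorem map_endEquivFun_DerSub :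
    (DerSub K (MonoidAlgebra K G)).map (endEquivFun K G).toLinearMap =
      actionCocycles K (ConjAct G) G := by
  ext c
  obtain ⟨d, rfl⟩ := (endEquivFun K G).surjective c
  simp [endEquivFun_mem_actionCocycles_iff]

end CommRing

theorem finrank_DerSub_monoidAlgebra_add_card_conjClasses [Field K] [Finite G]
    [Fintype (ConjClasses G)] {s : ConjClasses G → G}
    (hs : Function.RightInverse s ConjClasses.mk) :
    Module.finrank K (DerSub K (MonoidAlgebra K G)) + Fintype.card (ConjClasses G) =
      Nat.card G + ∑ C, Module.finrank K (Additive (Subgroup.centralizer {s C}) →+ K) := by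
  have : Finite (ConjAct G) := .of_equiv G toConjAct.toEquiv
  have orbit_iff (x y : G) : ConjClasses.mk x = ConjClasses.mk y ↔
      x ∈ MulAction.orbit (ConjAct G) y := by
    rw [ConjClasses.mk_eq_mk_iff_isConj, ConjAct.mem_orbit_conjAct]
  simp only [fun g : G => finrank_addMonoidHom_congr K (centralizerEquivStabilizer g)]
  rw [← LinearEquiv.finrank_map_eq (endEquivFun K G), map_endEquivFun_DerSub,
    actionCocycles.finrank_add_card orbit_iff hs]

end Derivation

section Dihedral

open DihedralGroup

variable {n : ℕ}

theorem map_eq_zero_of_odd_nsmul_eq_zero {A K : Type*} [AddMonoid A] [Semiring K] [CharP K 2]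
    (φ : A →+ K) {k : ℕ} (hk : Odd k) {a : A} (ha : k • a = 0) : φ a = 0 := by
  obtain ⟨m, rfl⟩ := hk
  simpa [add_nsmul, mul_nsmul, CharTwo.add_self_eq_zero, two_nsmul] using congrArg φ ha

theorem map_r_eq_zero {K : Type*} [Semiring K] [CharP K 2] (hn : Odd n)
    {H : Subgroup (DihedralGroup n)} (φ : Additive H →+ K) {i : ZMod n} (hi : r i ∈ H) :
    φ (.ofMul ⟨r i, hi⟩) = 0 :=
  map_eq_zero_of_odd_nsmul_eq_zero φ hn <| by
    rw [← ofMul_pow, ofMul_eq_zero]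
    ext
    simp

theorem map_sr_eq_map_sr {K : Type*} [Semiring K] [CharP K 2] (hn : Odd n)
    {H : Subgroup (DihedralGroup n)} (φ : Additive H →+ K) {i j : ZMod n} (hi : sr i ∈ H)
    (hj : sr j ∈ H) : φ (.ofMul ⟨sr i, hi⟩) = φ (.ofMul ⟨sr j, hj⟩) := by
  have hr : r (i - j) ∈ H := by simpa using H.mul_mem hj hi
  have hmul : (⟨sr i, hi⟩ : H) = ⟨sr j, hj⟩ * ⟨r (i - j), hr⟩ := by ext; simp
  rw [hmul, ofMul_mul, map_add, map_r_eq_zero hn φ hr, add_zero]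

/-- The additive character of `D_{2n}` in characteristic two which is `0` on rotations and `1` on
reflections. -/
def reflectionCharacter (n : ℕ) (K : Type*) [Semiring K] [CharP K 2] :
    Additive (DihedralGroup n) →+ K where
  toFun g := match g.toMul with
    | r _ => 0
    | sr _ => 1
  map_zero' := rfl
  map_add' := by
    rintro (_ | _) (_ | _)
    · exact (add_zero 0).symm
    · exact (zero_add 1).symm
    · exact (add_zero 1).symm
    · exact (CharTwo.add_self_eq_zero 1).symm

theorem reflectionCharacter_r {K : Type*} [Semiring K] [CharP K 2] (i : ZMod n) :
    reflectionCharacter n K (.ofMul (r i)) = 0 := rfl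

theorem reflectionCharacter_sr {K : Type*} [Semiring K] [CharP K 2] (i : ZMod n) :
    reflectionCharacter n K (.ofMul (sr i)) = 1 := rfl

theorem finrank_addMonoidHom_eq_ite_exists_sr_mem (K : Type*) [DivisionRing K] [CharP K 2]
    (hn : Odd n) (H : Subgroup (DihedralGroup n)) [Decidable (∃ i, sr i ∈ H)] :
    Module.finrank K (Additive H →+ K) = if ∃ i, sr i ∈ H then 1 else 0 := by
  split_ifs with h
  · obtain ⟨i, hi⟩ := h
    refine finrank_eq_one ((reflectionCharacter n K).comp H.subtype.toAdditive)
      (DFunLike.ne_iff.mpr ⟨.ofMul ⟨sr i, hi⟩, one_ne_zero⟩)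
      fun φ => ⟨φ (.ofMul ⟨sr i, hi⟩), ?_⟩
    ext ⟨j | j, hj⟩
    · simp [map_r_eq_zero hn φ hj, reflectionCharacter_r]
    · simp [map_sr_eq_map_sr hn φ hi hj, reflectionCharacter_sr]
  · have : Subsingleton (Additive H →+ K) := subsingleton_of_forall_eq 0 fun φ => by
      ext ⟨j | j, hj⟩
      · simp [map_r_eq_zero hn φ hj]
      · exact absurd ⟨j, hj⟩ h
    exact Module.finrank_zero_of_subsingleton

theorem isConj_sr_sr (hn : Odd n) (i j : ZMod n) : IsConj (sr i) (sr j) := by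
  have two_isUnit : IsUnit (2 : ZMod n) :=
    mod_cast (ZMod.isUnit_iff_coprime 2 n).mpr hn.coprime_two_left
  obtain ⟨k, hk⟩ := two_isUnit.dvd (a := i - j)
  have hconj : r k * sr i * (r k)⁻¹ = sr j := by
    rw [r_mul_sr, inv_r, sr_mul_r]
    congr 1
    linear_combination hk
  exact isConj_iff.mpr ⟨r k, hconj⟩

theorem not_isConj_r_sr (i j : ZMod n) : ¬ IsConj (r i) (sr j) := by
  rw [isConj_iff]
  rintro ⟨k | k, h⟩ <;> simp at h

theorem sr_mul_r_eq_r_mul_sr_iff (hn : Odd n) (i j : ZMod n) :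
    sr i * r j = r j * sr i ↔ j = 0 := by
  rw [sr_mul_r, r_mul_sr, sr.injEq, ← ZMod.add_self_eq_zero_iff_eq_zero hn]
  constructor <;> intro h <;> linear_combination h

theorem exists_sr_mem_centralizer_iff (hn : Odd n) (g : DihedralGroup n) :
    (∃ i, sr i ∈ Subgroup.centralizer {g}) ↔
      ConjClasses.mk g = 1 ∨ ConjClasses.mk g = ConjClasses.mk (sr 0) := by
  simp only [ConjClasses.one_eq_mk_one, ConjClasses.mk_eq_mk_iff_isConj, isConj_one_left,
    Subgroup.mem_centralizer_singleton_iff]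
  rcases g with j | j
  · simp only [sr_mul_r_eq_r_mul_sr_iff hn, not_isConj_r_sr, exists_const, or_false, one_def,
      r.injEq]
  · exact iff_of_true ⟨j, rfl⟩ (.inr (isConj_sr_sr hn j 0))

theorem sum_finrank_addMonoidHom_centralizer (K : Type*) [DivisionRing K] [CharP K 2] (hn : Odd n)
    [Fintype (ConjClasses (DihedralGroup n))] {s : ConjClasses (DihedralGroup n) → DihedralGroup n}
    (hs : Function.RightInverse s ConjClasses.mk) :
    ∑ C, Module.finrank K (Additive (Subgroup.centralizer {s C}) →+ K) = 2 := by
  classical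
  have one_ne_mk_sr : (1 : ConjClasses (DihedralGroup n)) ≠ ConjClasses.mk (sr 0) := by
    rw [ConjClasses.one_eq_mk_one, one_def, Ne, ConjClasses.mk_eq_mk_iff_isConj]
    exact not_isConj_r_sr 0 0
  simp only [finrank_addMonoidHom_eq_ite_exists_sr_mem K hn, exists_sr_mem_centralizer_iff hn, hs _]
  rw [Finset.sum_boole, ← Finset.card_pair one_ne_mk_sr, Nat.cast_id]
  congr 1
  ext C
  simp

end Dihedral

theorem finrank_derivations_groupAlgebra_dihedral_odd_general (n : ℕ) (hno : Odd n) (K : Type*)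
    [Field K] [CharP K 2] :
    Module.finrank K (DerSub K (MonoidAlgebra K (DihedralGroup n))) = (3 * n + 1) / 2 := by
  have : NeZero n := ⟨hno.pos.ne'⟩
  have := Fintype.ofFinite (ConjClasses (DihedralGroup n))
  have hs := Function.rightInverse_surjInv (ConjClasses.mk_surjective (α := DihedralGroup n))
  have h := finrank_DerSub_monoidAlgebra_add_card_conjClasses (K := K) hs
  rw [sum_finrank_addMonoidHom_centralizer K hno hs, ← Nat.card_eq_fintype_card,
    DihedralGroup.card_conjClasses_odd hno, DihedralGroup.nat_card] at h
  grind

/-- Let `n > 2` be odd, `m ≥ 1` and `K` a finite field with `2 ^ m`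
elements. Then the space `Der(K D_{2n})` of derivations of the group algebra of the dihedral
group of order `2n` is a `K`-vector space of dimension `(3n + 1) / 2`. -/
theorem finrank_derivations_groupAlgebra_dihedral_odd (n : ℕ) (hn : 2 < n) (hno : Odd n)
    (m : ℕ) (hm : 1 ≤ m) {K : Type*} [Field K] [Fintype K] (hK : Fintype.card K = 2 ^ m) :
    Module.finrank K (DerSub K (MonoidAlgebra K (DihedralGroup n))) = (3 * n + 1) / 2 := by
  have := Fact.mk Nat.prime_two
  have : CharP K 2 := charP_of_card_eq_prime_pow hK
  exact finrank_derivations_groupAlgebra_dihedral_odd_general n hno K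
end

section
/- Let n > 2 be an integer, let m ≥ 1, and let K = F_{2^m} be a finite field with 2^m elements. For b ∈ K D_{2n}, let d_b : K D_{2n} → K D_{2n} be the inner derivation d_b(a) = ab − ba. Then the set of inner derivations {d_b ∣ b ∈ K D_{2n}} of the group algebra of the dihedral group D_{2n} of order 2n is a K-vector space of dimension 3⌊(n−1)/2⌋. -/
/-! The kernel of `b ↦ d_b` on `R[G]` is the center, that is, the functions `G → R` that factor
through the set of conjugacy classes. Choosing a representative of each class and recording
`f x - f (representative of x)` for the other elements identifies the quotient with a free module
on the non-representatives, so the inner derivations have rank `|G| - #(conjugacy classes)` over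
any nontrivial commutative ring. For `D_{2n}`, pairs of commuting elements are counted by the
2-torsion of `ZMod n`, which gives `(n + 3 gcd(n, 2)) / 2` classes. -/

section InnerDerivation

/-- The linear map sending `b` to the inner derivation `d_b : a ↦ a * b - b * a`. -/
def innerDerivation (R A : Type*) [CommSemiring R] [Ring A] [Algebra R A] : A →ₗ[R] A →ₗ[R] A :=
  (LinearMap.mul R A).flip - LinearMap.mul R A

variable {R A : Type*} [CommSemiring R] [Ring A] [Algebra R A]

lemma innerDerivation_apply (b a : A) : innerDerivation R A b a = a * b - b * a := rfl

lemma ker_innerDerivation :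
    LinearMap.ker (innerDerivation R A) = Subalgebra.toSubmodule (Subalgebra.center R A) := by
  ext b
  simp only [LinearMap.mem_ker, LinearMap.ext_iff, innerDerivation_apply, LinearMap.zero_apply,
    sub_eq_zero, Subalgebra.mem_toSubmodule, Subalgebra.mem_center_iff]

end InnerDerivation

section QuotientByFactoringFunctions

lemma mem_range_funLeft_iff_factorsThrough {R M X Y : Type*} [Semiring R] [AddCommMonoid M]
    [Module R M] {q : X → Y} {f : X → M} :
    f ∈ LinearMap.range (LinearMap.funLeft R M q) ↔ f.FactorsThrough q := by
  simp only [LinearMap.mem_range, Function.factorsThrough_iff, LinearMap.funLeft, funext_iff,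
    LinearMap.coe_mk, AddHom.coe_mk, Function.comp_apply, eq_comm]

variable {R M X Y : Type*} [Ring R] [AddCommGroup M] [Module R M] {q : X → Y} {s : Y → X}

/-- For a section `s` of `q`, the map sending `f` to the differences `f x - f (s (q x))`, where `x`
runs over the points that `s` does not choose (the difference vanishes at the others). -/
def fiberDifference (R M : Type*) [Ring R] [AddCommGroup M] [Module R M] (q : X → Y) (s : Y → X) :
    (X → M) →ₗ[R] ((Set.range s)ᶜ : Set X) → M :=
  LinearMap.funLeft R M Subtype.val - LinearMap.funLeft R M (s ∘ q ∘ Subtype.val)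

lemma fiberDifference_apply (f : X → M) (x : ((Set.range s)ᶜ : Set X)) :
    fiberDifference R M q s f x = f x - f (s (q x)) := rfl

lemma ker_fiberDifference (hs : Function.RightInverse s q) :
    LinearMap.ker (fiberDifference R M q s) = LinearMap.range (LinearMap.funLeft R M q) := by
  ext f
  rw [mem_range_funLeft_iff_factorsThrough, LinearMap.mem_ker]
  constructor
  · intro hf
    have apply_section (x : X) : f x = f (s (q x)) := by
      by_cases hx : x ∈ Set.range s
      · obtain ⟨y, rfl⟩ := hx
        rw [hs y]
      · exact sub_eq_zero.1 (congrFun hf ⟨x, hx⟩)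
    intro x y hxy
    rw [apply_section x, hxy, ← apply_section y]
  · intro hf
    ext x
    exact sub_eq_zero.2 (hf (hs (q x)).symm)

lemma fiberDifference_surjective : Function.Surjective (fiberDifference R M q s) := by
  intro f
  refine ⟨Function.extend Subtype.val f 0, ?_⟩
  ext x
  have extend_section : Function.extend Subtype.val f 0 (s (q x)) = 0 :=
    Function.extend_apply' _ _ _ fun ⟨y, hy⟩ => y.2 ⟨q x, hy.symm⟩
  rw [fiberDifference_apply, Subtype.val_injective.extend_apply, extend_section, sub_zero]

theorem finrank_quotient_range_funLeft_add_card [StrongRankCondition R] [Finite X]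
    (hq : Function.Surjective q) :
    Module.finrank R ((X → R) ⧸ LinearMap.range (LinearMap.funLeft R R q)) + Nat.card Y =
      Nat.card X := by
  obtain ⟨s, hs⟩ := hq.hasRightInverse
  have := Fintype.ofFinite ((Set.range s)ᶜ : Set X)
  let e := (Submodule.quotEquivOfEq _ _ (ker_fiberDifference (R := R) (M := R) hs).symm).trans
    ((fiberDifference R R q s).quotKerEquivOfSurjective fiberDifference_surjective)
  rw [e.finrank_eq, Module.finrank_fintype_fun_eq_card, ← Nat.card_eq_fintype_card,
    ← Nat.card_range_of_injective hs.injective, Nat.card_coe_set_eq, Nat.card_coe_set_eq,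
    add_comm, Set.ncard_add_ncard_compl]

end QuotientByFactoringFunctions

section GroupAlgebra

open MonoidAlgebra

lemma mem_center_monoidAlgebra_iff {R G : Type*} [CommSemiring R] [Group G]
    {b : MonoidAlgebra R G} :
    b ∈ Subalgebra.center R (MonoidAlgebra R G) ↔
      Function.FactorsThrough b.coeff (ConjClasses.mk : G → ConjClasses G) := by
  rw [Subalgebra.mem_center_iff]
  constructor
  · intro hb g h hgh
    obtain ⟨c, rfl⟩ := isConj_iff.1 (ConjClasses.mk_eq_mk_iff_isConj.1 hgh)
    simpa using congrArg (fun a => a.coeff (c * g)) (hb (single c 1))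
  · intro hb a
    induction a using MonoidAlgebra.induction_linear with
    | zero => rw [zero_mul, mul_zero]
    | add x y hx hy => rw [add_mul, mul_add, hx, hy]
    | single c k =>
      ext h
      have hconj : IsConj (c⁻¹ * h) (h * c⁻¹) := isConj_iff.2 ⟨c, by group⟩
      rw [coeff_single_mul_apply, coeff_mul_single_apply, mul_comm,
        hb (ConjClasses.mk_eq_mk_iff_isConj.2 hconj)]

lemma map_center_monoidAlgebra_eq_range_funLeft (R G : Type*) [CommSemiring R] [Group G]
    [Finite G] :
    (Subalgebra.toSubmodule (Subalgebra.center R (MonoidAlgebra R G))).map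
        ((coeffLinearEquiv R).trans (Finsupp.linearEquivFunOnFinite R R G)).toLinearMap =
      LinearMap.range (LinearMap.funLeft R R (ConjClasses.mk : G → ConjClasses G)) := by
  ext f
  rw [Submodule.mem_map_equiv, Subalgebra.mem_toSubmodule, mem_center_monoidAlgebra_iff,
    mem_range_funLeft_iff_factorsThrough]
  rfl

theorem finrank_range_innerDerivation_monoidAlgebra_add_card_conjClasses (R G : Type*)
    [CommRing R] [Nontrivial R] [Group G] [Finite G] :
    Module.finrank R (LinearMap.range (innerDerivation R (MonoidAlgebra R G))) +
      Nat.card (ConjClasses G) = Nat.card G := by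
  let e := (innerDerivation R (MonoidAlgebra R G)).quotKerEquivRange.symm.trans <|
    (Submodule.quotEquivOfEq _ _ ker_innerDerivation).trans <|
      Submodule.Quotient.equiv _ _ _ (map_center_monoidAlgebra_eq_range_funLeft R G)
  rw [e.finrank_eq, finrank_quotient_range_funLeft_add_card ConjClasses.mk_surjective]

end GroupAlgebra

section Dihedral

open DihedralGroup

/-- The elements of `ZMod n` killed by doubling: the rotations by these are the ones that commute
with reflections. -/
abbrev twoTorsion (n : ℕ) : AddSubgroup (ZMod n) := (nsmulAddMonoidHom 2).ker

lemma mem_twoTorsion {n : ℕ} {a : ZMod n} : a ∈ twoTorsion n ↔ 2 * a = 0 := by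
  simp [AddMonoidHom.mem_ker]

/-- Commuting pairs in the dihedral group: two rotations, or a rotation and a reflection in either
order, or two reflections (recorded by their difference and the first one). -/
def dihedralGroupCommuteEquiv (n : ℕ) :
    { p : DihedralGroup n × DihedralGroup n // Commute p.1 p.2 } ≃
      (ZMod n × ZMod n) ⊕ (twoTorsion n × ZMod n) ⊕ (twoTorsion n × ZMod n) ⊕
        (twoTorsion n × ZMod n) where
  toFun
    | ⟨⟨r i, r j⟩, _⟩ => .inl (i, j)
    | ⟨⟨r i, sr j⟩, h⟩ => .inr <| .inl
        (⟨i, mem_twoTorsion.2 (by linear_combination -sr.inj h.eq)⟩, j)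
    | ⟨⟨sr i, r j⟩, h⟩ => .inr <| .inr <| .inl
        (⟨j, mem_twoTorsion.2 (by linear_combination sr.inj h.eq)⟩, i)
    | ⟨⟨sr i, sr j⟩, h⟩ => .inr <| .inr <| .inr
        (⟨j - i, mem_twoTorsion.2 (by linear_combination r.inj h.eq)⟩, i)
  invFun
    | .inl (i, j) => ⟨(r i, r j), congrArg r (add_comm i j)⟩
    | .inr (.inl (t, j)) =>
        ⟨(r t, sr j), congrArg sr (by linear_combination -mem_twoTorsion.1 t.2)⟩
    | .inr (.inr (.inl (t, i))) =>
        ⟨(sr i, r t), congrArg sr (by linear_combination mem_twoTorsion.1 t.2)⟩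
    | .inr (.inr (.inr (t, i))) =>
        ⟨(sr i, sr (t + i)), congrArg r (by linear_combination mem_twoTorsion.1 t.2)⟩
  left_inv := by rintro ⟨⟨i | i, j | j⟩, h⟩ <;> simp
  right_inv := by rintro (⟨i, j⟩ | ⟨t, j⟩ | ⟨t, i⟩ | ⟨t, i⟩) <;> simp

variable (n : ℕ)

lemma card_twoTorsion [NeZero n] : Nat.card (twoTorsion n) = n.gcd 2 := by
  rw [IsAddCyclic.card_nsmulAddMonoidHom_ker, Nat.card_zmod]

lemma card_commute_dihedralGroup [NeZero n] :
    Nat.card { p : DihedralGroup n × DihedralGroup n // Commute p.1 p.2 } =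
      n * (n + 3 * n.gcd 2) := by
  simp only [Nat.card_congr (dihedralGroupCommuteEquiv n), Nat.card_sum, Nat.card_prod,
    card_twoTorsion, Nat.card_zmod]
  ring

lemma two_mul_card_conjClasses_dihedralGroup [NeZero n] :
    2 * Nat.card (ConjClasses (DihedralGroup n)) = n + 3 * n.gcd 2 := by
  have h := card_comm_eq_card_conjClasses_mul_card (DihedralGroup n)
  rw [card_commute_dihedralGroup, nat_card] at h
  exact Nat.eq_of_mul_eq_mul_left (NeZero.pos n) (by linarith)

end Dihedral

theorem finrank_innerDerivations_groupAlgebra_dihedral_general (n : ℕ) [NeZero n]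
    (R : Type*) [CommRing R] [Nontrivial R] :
    Module.finrank R
      (LinearMap.range (innerDerivation R (MonoidAlgebra R (DihedralGroup n)))) =
        3 * ((n - 1) / 2) := by
  have hrank := finrank_range_innerDerivation_monoidAlgebra_add_card_conjClasses R (DihedralGroup n)
  have hclasses := two_mul_card_conjClasses_dihedralGroup n
  rw [DihedralGroup.nat_card] at hrank
  rcases n.even_or_odd with heven | hodd
  · rw [Nat.gcd_eq_right heven.two_dvd] at hclasses
    have := NeZero.pos n
    grind
  · rw [hodd.coprime_two_right.gcd_eq_one] at hclasses
    grind

/-- Let `n > 2`, `m ≥ 1` and let `K` be a finite field with `2 ^ m`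
elements. For `b` in the group algebra `A = K D_{2n}` of the dihedral group of order `2n`,
the inner derivation `d_b : A → A` is given by `d_b a = a * b - b * a`; the linear map
`b ↦ d_b` is `(LinearMap.mul K A).flip - LinearMap.mul K A`. The set of inner derivations
(the range of this map) is a `K`-vector space of dimension `3⌊(n − 1)/2⌋`. -/
theorem finrank_innerDerivations_groupAlgebra_dihedral (n : ℕ) (hn : 2 < n)
    (m : ℕ) (hm : 1 ≤ m) {K : Type*} [Field K] [Fintype K] (hK : Fintype.card K = 2 ^ m) :
    (∀ b a : MonoidAlgebra K (DihedralGroup n),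
      ((LinearMap.mul K (MonoidAlgebra K (DihedralGroup n))).flip -
        LinearMap.mul K (MonoidAlgebra K (DihedralGroup n))) b a = a * b - b * a) ∧
    Module.finrank K
        (LinearMap.range
          ((LinearMap.mul K (MonoidAlgebra K (DihedralGroup n))).flip -
            LinearMap.mul K (MonoidAlgebra K (DihedralGroup n)))) = 3 * ((n - 1) / 2) := by
  have : NeZero n := ⟨by omega⟩
  exact ⟨innerDerivation_apply, finrank_innerDerivations_groupAlgebra_dihedral_general n K⟩
end
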